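/- arXiv:2302.13260 — 3 statements merged into one kernel-verified Lean document; each statement's English description precedes it below -/
import Mathlib

section
/- (Pick's Theorem) Let P be a convex polygon in the plane all of whose vertices are lattice points. Then area(P) = i(P) + b(P)/2 − 1, where i(P) is the number of lattice points in the interior of P and b(P) is the number of lattice points on the boundary of P. -/
open MeasureTheory

/-!
Slice the polygon `P` by the vertical lines through the integers. It lies between a convex lower and
a concave upper boundary, each a polygonal path with lattice breakpoints. The point reflection about
the midpoint of an edge preserves the lattice and exchanges floors with ceilings, so on an edge over
`[a, b]` that is the graph of `g`, `2 ∫ g` equals `∑ ⌊g x⌋` over `[a, b)` plus `∑ ⌈g x⌉` over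
`(a, b]`; both sides are additive along a path. Column by column, floors count the lattice points of
`P` and ceilings those of its interior, whence `#P + #(int P) = 2 area(P) + 2`.
-/

section FloorCeilSum

/-- A discrete counterpart of twice the integral of `g` over `[a, b]`: `⌊g x⌋` counts, up to a
constant, the lattice points of a column on or below the graph of `g`, and `⌈g x⌉` those strictly
below it. The half-open ranges make the sum additive in the interval. -/
noncomputable def floorCeilSum (g : ℝ → ℝ) (a b : ℤ) : ℤ :=
  ∑ x ∈ Finset.Ico a b, ⌊g x⌋ + ∑ x ∈ Finset.Ioc a b, ⌈g x⌉

variable {g : ℝ → ℝ} {a b c : ℤ}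

lemma floorCeilSum_self (g : ℝ → ℝ) (a : ℤ) : floorCeilSum g a a = 0 := by
  simp [floorCeilSum]

lemma floorCeilSum_add_adjacent (g : ℝ → ℝ) (hab : a ≤ b) (hbc : b ≤ c) :
    floorCeilSum g a b + floorCeilSum g b c = floorCeilSum g a c := by
  unfold floorCeilSum
  rw [← Finset.Ico_union_Ico_eq_Ico hab hbc, ← Finset.Ioc_union_Ioc_eq_Ioc hab hbc,
    Finset.sum_union (Finset.Ico_disjoint_Ico_consecutive a b c),
    Finset.sum_union (Finset.Ioc_disjoint_Ioc_of_le le_rfl)]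
  ring

lemma floorCeilSum_eq_sum_Icc_add_sum_Ioo {z : ℤ} (hab : a < b) (hb : g b = z) :
    floorCeilSum g a b = ∑ x ∈ Finset.Icc a b, ⌊g x⌋ + ∑ x ∈ Finset.Ioo a b, ⌈g x⌉ := by
  rw [floorCeilSum, ← Finset.Ico_insert_right hab.le, ← Finset.Ioo_insert_right hab,
    Finset.sum_insert Finset.right_notMem_Ico, Finset.sum_insert Finset.right_notMem_Ioo, hb,
    Int.floor_intCast, Int.ceil_intCast]
  ring

-- The point reflection `(x, y) ↦ (a + b - x, z - y)` exchanges floors and ceilings.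
lemma floorCeilSum_of_reflect {z : ℤ} (hab : a ≤ b)
    (hg : ∀ x ∈ Set.Icc (a : ℝ) b, g (a + b - x) = z - g x) :
    floorCeilSum g a b = (b - a) * z := by
  have hceil : ∑ x ∈ Finset.Ioc a b, ⌈g x⌉ = ∑ x ∈ Finset.Ico a b, (z - ⌊g x⌋) := by
    refine Finset.sum_nbij' (a + b - ·) (a + b - ·) ?_ ?_ ?_ ?_ fun x hx => ?_
    iterate 4 intro x hx; simp only [Finset.mem_Ioc, Finset.mem_Ico] at *; omega
    have hx' : (x : ℝ) ∈ Set.Icc (a : ℝ) b := by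
      simpa using Finset.Ioc_subset_Icc_self hx
    push_cast
    rw [hg x hx', sub_eq_add_neg (z : ℝ), Int.floor_intCast_add, Int.floor_neg]
    ring
  rw [floorCeilSum, hceil, ← Finset.sum_add_distrib]
  simp [Int.toNat_of_nonneg (sub_nonneg.2 hab)]

lemma two_mul_integral_of_reflect {a b : ℝ} {g : ℝ → ℝ} {z : ℝ} (hab : a ≤ b)
    (hint : IntervalIntegrable g volume a b)
    (hg : ∀ x ∈ Set.Icc a b, g (a + b - x) = z - g x) :
    2 * ∫ x in a..b, g x = (b - a) * z := by
  have hself : ∫ x in a..b, g x = ∫ x in a..b, (z - g x) := by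
    calc ∫ x in a..b, g x = ∫ x in a..b, g (a + b - x) := by
          rw [intervalIntegral.integral_comp_sub_left g (a + b)]; simp
      _ = ∫ x in a..b, (z - g x) :=
          intervalIntegral.integral_congr fun x hx => hg x (Set.uIcc_of_le hab ▸ hx)
  rw [intervalIntegral.integral_sub (by simp) hint, intervalIntegral.integral_const,
    smul_eq_mul] at hself
  linarith

end FloorCeilSum

section LatticePath

/-- The graph of `g` over `[a, b]` is a polygonal path whose breakpoints are lattice points. The
right end of an edge is a lattice point because the tail starts there. -/
inductive IsLatticePath (g : ℝ → ℝ) : ℤ → ℤ → Prop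
  | point {a z : ℤ} (ha : g a = z) : IsLatticePath g a a
  | cons {a b c z : ℤ} {m : ℝ} (hab : a < b)
      (hg : ∀ x ∈ Set.Icc (a : ℝ) b, g x = z + m * (x - a)) (tail : IsLatticePath g b c) :
      IsLatticePath g a c

namespace IsLatticePath

variable {g : ℝ → ℝ} {a b c : ℤ}

lemma le (h : IsLatticePath g a b) : a ≤ b := by
  induction h with
  | point => exact le_rfl
  | cons hab _ _ ih => exact hab.le.trans ih

lemma exists_eq_left (h : IsLatticePath g a b) : ∃ z : ℤ, g a = z := by
  cases h with
  | point ha => exact ⟨_, ha⟩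
  | @cons _ _ _ z _ hab hg =>
    exact ⟨z, by simpa using hg a (Set.left_mem_Icc.2 (Int.cast_le.2 hab.le))⟩

lemma exists_eq_right (h : IsLatticePath g a b) : ∃ z : ℤ, g b = z := by
  induction h with
  | point ha => exact ⟨_, ha⟩
  | cons _ _ _ ih => exact ih

lemma intervalIntegrable (h : IsLatticePath g a b) : IntervalIntegrable g volume a b := by
  induction h with
  | point => exact IntervalIntegrable.refl
  | @cons a b _ z m hab hg _ ih =>
    have hline : IntervalIntegrable (fun x : ℝ => z + m * (x - a)) volume a b :=
      Continuous.intervalIntegrable (by fun_prop) _ _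
    refine IntervalIntegrable.trans (hline.congr fun x hx => (hg x ?_).symm) ih
    rw [Set.uIoc_of_le (Int.cast_le.2 hab.le)] at hx
    exact Set.Ioc_subset_Icc_self hx

lemma two_mul_integral_eq_floorCeilSum (h : IsLatticePath g a b) :
    2 * ∫ x in (a : ℝ)..b, g x = floorCeilSum g a b := by
  induction h with
  | point => simp [floorCeilSum_self]
  | @cons a b c z m hab hg tail ih =>
    have hab' : (a : ℝ) ≤ b := Int.cast_le.2 hab.le
    have hint : IntervalIntegrable g volume a b :=
      (cons hab hg tail).intervalIntegrable.mono_set (by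
        rw [Set.uIcc_of_le hab', Set.uIcc_of_le (hab'.trans (Int.cast_le.2 tail.le))]
        exact Set.Icc_subset_Icc_right (Int.cast_le.2 tail.le))
    obtain ⟨w, hw⟩ := tail.exists_eq_left
    have hslope : (w : ℝ) = z + m * (b - a) := hw ▸ hg b (Set.right_mem_Icc.2 hab')
    have hreflect : ∀ x ∈ Set.Icc (a : ℝ) b, g (a + b - x) = (z + w : ℤ) - g x := by
      intro x hx
      rw [hg x hx, hg (a + b - x) ⟨by linarith [hx.2], by linarith [hx.1]⟩]
      push_cast
      linear_combination -hslope
    have hedge : 2 * ∫ x in (a : ℝ)..b, g x = floorCeilSum g a b := by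
      rw [two_mul_integral_of_reflect hab' hint hreflect, floorCeilSum_of_reflect hab.le hreflect]
      push_cast; rfl
    rw [← intervalIntegral.integral_add_adjacent_intervals hint tail.intervalIntegrable, mul_add,
      hedge, ih, ← floorCeilSum_add_adjacent g hab.le tail.le]
    push_cast; rfl

end IsLatticePath

end LatticePath

section Boundary

/-- The top of the fibre of `P ⊆ E × ℝ` over `x`; meaningful where that fibre is nonempty and
bounded. -/
noncomputable def upperBoundary {E : Type*} (P : Set (E × ℝ)) (x : E) : ℝ :=
  sSup (Prod.mk x ⁻¹' P)

/-- The bottom of the fibre of `P ⊆ E × ℝ` over `x`; meaningful where that fibre is nonempty and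
bounded. -/
noncomputable def lowerBoundary {E : Type*} (P : Set (E × ℝ)) (x : E) : ℝ :=
  sInf (Prod.mk x ⁻¹' P)

lemma neg_lowerBoundary {E : Type*} (P : Set (E × ℝ)) :
    -lowerBoundary P = upperBoundary {p | (p.1, -p.2) ∈ P} := by
  ext x
  rw [Pi.neg_apply, lowerBoundary, Real.sInf_def, neg_neg]
  rfl

lemma interior_image_subset_of_convex {E F : Type*} [AddCommGroup E] [Module ℝ E]
    [TopologicalSpace E] [IsTopologicalAddGroup E] [ContinuousSMul ℝ E] [AddCommGroup F]
    [Module ℝ F] [TopologicalSpace F] [IsTopologicalAddGroup F] [ContinuousSMul ℝ F]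
    (f : E →L[ℝ] F) (hf : IsOpenMap f) {P : Set E} (hP : Convex ℝ P)
    (hne : (interior P).Nonempty) : interior (f '' P) ⊆ f '' interior P := by
  have hopen : IsOpen (f '' interior P) := hf _ isOpen_interior
  have hconv : Convex ℝ (f '' interior P) := hP.interior.linear_image f.toLinearMap
  have hsub : f '' P ⊆ closure (f '' interior P) := by
    calc f '' P ⊆ f '' closure (interior P) := by
          rw [hP.closure_interior_eq_closure_of_nonempty_interior hne]
          exact Set.image_mono subset_closure
      _ ⊆ closure (f '' interior P) := image_closure_subset_closure_image f.continuous
  calc interior (f '' P) ⊆ interior (closure (f '' interior P)) := interior_mono hsub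
    _ = f '' interior P := by
      rw [hconv.interior_closure_eq_interior_of_nonempty_interior
        (by rw [hopen.interior_eq]; exact hne.image f), hopen.interior_eq]

variable {E : Type*} [NormedAddCommGroup E] [NormedSpace ℝ E] {P : Set (E × ℝ)} {x : E} {y : ℝ}

lemma preimage_mk_eq_Icc (hcomp : IsCompact P) (hconv : Convex ℝ P) (hx : x ∈ Prod.fst '' P) :
    Prod.mk x ⁻¹' P = Set.Icc (lowerBoundary P x) (upperBoundary P x) := by
  have hne : (Prod.mk x ⁻¹' P).Nonempty := by
    obtain ⟨p, hp, rfl⟩ := hx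
    exact ⟨p.2, hp⟩
  have hfibre_comp : IsCompact (Prod.mk x ⁻¹' P) :=
    (hcomp.image continuous_snd).of_isClosed_subset (hcomp.isClosed.preimage (by fun_prop))
      fun y hy => ⟨(x, y), hy, rfl⟩
  have hfibre_conv : Convex ℝ (Prod.mk x ⁻¹' P) :=
    hconv.affine_preimage ((AffineMap.const ℝ ℝ x).prod (AffineMap.id ℝ ℝ))
  exact eq_Icc_of_connected_compact ⟨hne, hfibre_conv.isPreconnected⟩ hfibre_comp

lemma mem_iff_boundary_le (hcomp : IsCompact P) (hconv : Convex ℝ P) :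
    (x, y) ∈ P ↔ x ∈ Prod.fst '' P ∧ lowerBoundary P x ≤ y ∧ y ≤ upperBoundary P x := by
  constructor
  · intro h
    have hx : x ∈ Prod.fst '' P := ⟨_, h, rfl⟩
    exact ⟨hx, (preimage_mk_eq_Icc hcomp hconv hx).subset h⟩
  · rintro ⟨hx, hy⟩
    exact (preimage_mk_eq_Icc hcomp hconv hx).superset hy

lemma lowerBoundary_le_upperBoundary (hcomp : IsCompact P) (hconv : Convex ℝ P)
    (hx : x ∈ Prod.fst '' P) : lowerBoundary P x ≤ upperBoundary P x := by
  obtain ⟨⟨x, y⟩, hp, rfl⟩ := hx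
  obtain ⟨-, hl, hu⟩ := (mem_iff_boundary_le hcomp hconv).1 hp
  exact hl.trans hu

lemma mk_upperBoundary_mem (hcomp : IsCompact P) (hconv : Convex ℝ P)
    (hx : x ∈ Prod.fst '' P) : (x, upperBoundary P x) ∈ P :=
  (mem_iff_boundary_le hcomp hconv).2
    ⟨hx, lowerBoundary_le_upperBoundary hcomp hconv hx, le_rfl⟩

lemma mk_lowerBoundary_mem (hcomp : IsCompact P) (hconv : Convex ℝ P)
    (hx : x ∈ Prod.fst '' P) : (x, lowerBoundary P x) ∈ P :=
  (mem_iff_boundary_le hcomp hconv).2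
    ⟨hx, le_rfl, lowerBoundary_le_upperBoundary hcomp hconv hx⟩

lemma concaveOn_upperBoundary (hcomp : IsCompact P) (hconv : Convex ℝ P) :
    ConcaveOn ℝ (Prod.fst '' P) (upperBoundary P) :=
  ⟨hconv.linear_image (LinearMap.fst ℝ E ℝ), fun _ hx _ hx' _ _ hs ht hst =>
    ((mem_iff_boundary_le hcomp hconv).1 (hconv (mk_upperBoundary_mem hcomp hconv hx)
      (mk_upperBoundary_mem hcomp hconv hx') hs ht hst)).2.2⟩

lemma convexOn_lowerBoundary (hcomp : IsCompact P) (hconv : Convex ℝ P) :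
    ConvexOn ℝ (Prod.fst '' P) (lowerBoundary P) :=
  ⟨hconv.linear_image (LinearMap.fst ℝ E ℝ), fun _ hx _ hx' _ _ hs ht hst =>
    ((mem_iff_boundary_le hcomp hconv).1 (hconv (mk_lowerBoundary_mem hcomp hconv hx)
      (mk_lowerBoundary_mem hcomp hconv hx') hs ht hst)).2.1⟩

lemma mk_upperBoundary_mem_extremePoints {P : Set (ℝ × ℝ)} (hcomp : IsCompact P)
    (hconv : Convex ℝ P) {a : ℝ} (ha : IsLeast (Prod.fst '' P) a) :
    (a, upperBoundary P a) ∈ P.extremePoints ℝ := by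
  refine mem_extremePoints_iff_left.2 ⟨mk_upperBoundary_mem hcomp hconv ha.1, ?_⟩
  rintro ⟨x, y⟩ hz ⟨x', y'⟩ hw ⟨s, t, hs, ht, hst, heq⟩
  simp only [Prod.smul_mk, smul_eq_mul, Prod.mk_add_mk, Prod.mk.injEq] at heq
  have hx : a ≤ x := ha.2 ⟨_, hz, rfl⟩
  have hx' : a ≤ x' := ha.2 ⟨_, hw, rfl⟩
  obtain rfl : t = 1 - s := by linarith
  obtain rfl : x = a := by nlinarith
  obtain rfl : x' = x := by nlinarith
  have hy := ((mem_iff_boundary_le hcomp hconv).1 hz).2.2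
  have hy' := ((mem_iff_boundary_le hcomp hconv).1 hw).2.2
  exact Prod.ext rfl (by nlinarith)

variable [FiniteDimensional ℝ E]

lemma interior_eq_regionBetween (hcomp : IsCompact P) (hconv : Convex ℝ P) :
    interior P =
      regionBetween (lowerBoundary P) (upperBoundary P) (interior (Prod.fst '' P)) := by
  apply Set.Subset.antisymm
  · rintro ⟨x, y⟩ hp
    have hx : x ∈ interior (Prod.fst '' P) := isOpenMap_fst.image_interior_subset P ⟨_, hp, rfl⟩
    have hy : y ∈ interior (Prod.mk x ⁻¹' P) :=
      preimage_interior_subset_interior_preimage (by fun_prop) hp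
    rw [preimage_mk_eq_Icc hcomp hconv (interior_subset hx), interior_Icc] at hy
    exact ⟨hx, hy⟩
  · rintro ⟨x, y⟩ ⟨hx, hl, hu⟩
    have hnhds : interior (Prod.fst '' P) ∈ nhds x := isOpen_interior.mem_nhds hx
    have hlower : ContinuousAt (fun p : E × ℝ => lowerBoundary P p.1) (x, y) :=
      ((convexOn_lowerBoundary hcomp hconv).continuousOn_interior.continuousAt hnhds).comp
        (f := Prod.fst) (x := (x, y)) continuousAt_fst
    have hupper : ContinuousAt (fun p : E × ℝ => upperBoundary P p.1) (x, y) :=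
      ((concaveOn_upperBoundary hcomp hconv).continuousOn_interior.continuousAt hnhds).comp
        (f := Prod.fst) (x := (x, y)) continuousAt_fst
    rw [mem_interior_iff_mem_nhds]
    filter_upwards [continuousAt_fst.eventually hnhds, hlower.eventually_lt continuousAt_snd hl,
      continuousAt_snd.eventually_lt hupper hu] with p hx' hl' hu'
    exact (mem_iff_boundary_le hcomp hconv).2 ⟨interior_subset hx', hl'.le, hu'.le⟩

lemma lowerBoundary_lt_upperBoundary (hcomp : IsCompact P) (hconv : Convex ℝ P)
    (hne : (interior P).Nonempty) (hx : x ∈ interior (Prod.fst '' P)) :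
    lowerBoundary P x < upperBoundary P x := by
  obtain ⟨p, hp, rfl⟩ :=
    interior_image_subset_of_convex (ContinuousLinearMap.fst ℝ E ℝ) isOpenMap_fst hconv hne hx
  rw [interior_eq_regionBetween hcomp hconv] at hp
  exact hp.2.1.trans hp.2.2

lemma measure_eq_integral_upperBoundary_sub_lowerBoundary [MeasurableSpace E] [BorelSpace E]
    (μ : Measure E) [μ.IsAddHaarMeasure] (hcomp : IsCompact P) (hconv : Convex ℝ P)
    (hl : IntegrableOn (lowerBoundary P) (Prod.fst '' P) μ)
    (hu : IntegrableOn (upperBoundary P) (Prod.fst '' P) μ) :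
    (μ.prod volume P).toReal =
      ∫ x in Prod.fst '' P, (upperBoundary P x - lowerBoundary P x) ∂μ := by
  have hfst : Convex ℝ (Prod.fst '' P) := hconv.linear_image (LinearMap.fst ℝ E ℝ)
  have hae : interior (Prod.fst '' P) =ᵐ[μ] Prod.fst '' P :=
    interior_ae_eq_of_null_frontier (hfst.addHaar_frontier μ)
  have hle : ∀ x ∈ interior (Prod.fst '' P), lowerBoundary P x ≤ upperBoundary P x :=
    fun x hx => lowerBoundary_le_upperBoundary hcomp hconv (interior_subset hx)
  rw [← measure_interior_of_null_frontier (hconv.addHaar_frontier (μ.prod volume)),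
    interior_eq_regionBetween hcomp hconv, volume_regionBetween_eq_integral
      (hl.mono_set interior_subset) (hu.mono_set interior_subset) isOpen_interior.measurableSet hle,
    setIntegral_congr_set hae.symm]
  exact ENNReal.toReal_ofReal
    (setIntegral_nonneg isOpen_interior.measurableSet fun x hx => sub_nonneg.2 (hle x hx))

end Boundary

section LatticePolygon

/-- The convex hull in the plane of a finite set of lattice points. -/
def latticePolygon (V : Finset (ℤ × ℤ)) : Set (ℝ × ℝ) :=
  convexHull ℝ ((fun p : ℤ × ℤ => ((p.1 : ℝ), (p.2 : ℝ))) '' (V : Set (ℤ × ℤ)))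

variable {V : Finset (ℤ × ℤ)} {p q : ℤ × ℤ} {A B : ℤ}

lemma mem_latticePolygon (hp : p ∈ V) : ((p.1 : ℝ), (p.2 : ℝ)) ∈ latticePolygon V :=
  subset_convexHull ℝ _ ⟨p, hp, rfl⟩

lemma convex_latticePolygon (V : Finset (ℤ × ℤ)) : Convex ℝ (latticePolygon V) :=
  convex_convexHull ℝ _

lemma isCompact_latticePolygon (V : Finset (ℤ × ℤ)) : IsCompact (latticePolygon V) :=
  (V.finite_toSet.image _).isCompact_convexHull (𝕜 := ℝ)

lemma cast_fst_mem_image_fst (hp : p ∈ V) : (p.1 : ℝ) ∈ Prod.fst '' latticePolygon V :=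
  ⟨_, mem_latticePolygon hp, rfl⟩

lemma le_upperBoundary_of_mem (hp : p ∈ V) : (p.2 : ℝ) ≤ upperBoundary (latticePolygon V) p.1 :=
  ((mem_iff_boundary_le (isCompact_latticePolygon V) (convex_latticePolygon V)).1
    (mem_latticePolygon hp)).2.2

lemma le_of_mem_latticePolygon (f : ℝ × ℝ →ₗ[ℝ] ℝ) {c : ℝ} (hf : ∀ p ∈ V, f (p.1, p.2) ≤ c)
    {z : ℝ × ℝ} (hz : z ∈ latticePolygon V) : f z ≤ c := by
  refine convexHull_min ?_ (convex_halfSpace_le f.isLinear c) hz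
  rintro _ ⟨p, hp, rfl⟩
  exact hf p hp

lemma exists_image_fst_latticePolygon_eq_Icc (hV : V.Nonempty) :
    ∃ A B : ℤ, Prod.fst '' latticePolygon V = Set.Icc (A : ℝ) B := by
  obtain ⟨p, hp, hmin⟩ := V.exists_min_image Prod.fst hV
  obtain ⟨q, hq, hmax⟩ := V.exists_max_image Prod.fst hV
  refine ⟨p.1, q.1, Set.Subset.antisymm ?_ ?_⟩
  · rintro _ ⟨z, hz, rfl⟩
    exact ⟨neg_le_neg_iff.1 <| le_of_mem_latticePolygon (-LinearMap.fst ℝ ℝ ℝ)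
        (fun r hr => neg_le_neg (Int.cast_le.2 (hmin r hr))) hz,
      le_of_mem_latticePolygon (LinearMap.fst ℝ ℝ ℝ) (fun r hr => Int.cast_le.2 (hmax r hr)) hz⟩
  · exact ((convex_latticePolygon V).linear_image (LinearMap.fst ℝ ℝ ℝ)).ordConnected.out
      (cast_fst_mem_image_fst hp) (cast_fst_mem_image_fst hq)

lemma exists_lt_and_image_fst_latticePolygon_eq_Icc
    (hne : (interior (latticePolygon V)).Nonempty) :
    ∃ A B : ℤ, A < B ∧ Prod.fst '' latticePolygon V = Set.Icc (A : ℝ) B := by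
  have hV : V.Nonempty := by
    rw [Finset.nonempty_iff_ne_empty]
    rintro rfl
    simp [latticePolygon] at hne
  obtain ⟨A, B, hI⟩ := exists_image_fst_latticePolygon_eq_Icc hV
  have hIoo : (Set.Ioo (A : ℝ) B).Nonempty := by
    rw [← interior_Icc, ← hI]
    exact (hne.image Prod.fst).mono (isOpenMap_fst.image_interior_subset _)
  exact ⟨A, B, Int.cast_lt.1 (Set.nonempty_Ioo.1 hIoo), hI⟩

lemma fst_mem_Icc (hI : Prod.fst '' latticePolygon V = Set.Icc (A : ℝ) B) (hp : p ∈ V) :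
    p.1 ∈ Set.Icc A B := by
  simpa using hI.subset (cast_fst_mem_image_fst hp)

lemma exists_mem_fst_gt (hI : Prod.fst '' latticePolygon V = Set.Icc (A : ℝ) B) (hAB : A ≤ B)
    {n : ℤ} (hn : n < B) : ∃ q ∈ V, n < q.1 := by
  by_contra! h
  obtain ⟨z, hz, hzB⟩ := hI.superset (Set.right_mem_Icc.2 (Int.cast_le.2 hAB))
  have : z.1 ≤ n :=
    le_of_mem_latticePolygon (LinearMap.fst ℝ ℝ ℝ) (fun r hr => Int.cast_le.2 (h r hr)) hz
  exact (hzB ▸ this).not_gt (Int.cast_lt.2 hn)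

lemma exists_mem_upperBoundary_left (hI : Prod.fst '' latticePolygon V = Set.Icc (A : ℝ) B)
    (hAB : A ≤ B) : ∃ p ∈ V, p.1 = A ∧ upperBoundary (latticePolygon V) p.1 = p.2 := by
  have hleast : IsLeast (Prod.fst '' latticePolygon V) (A : ℝ) :=
    hI ▸ isLeast_Icc (Int.cast_le.2 hAB)
  obtain ⟨p, hp, heq⟩ := extremePoints_convexHull_subset <| mk_upperBoundary_mem_extremePoints
    (isCompact_latticePolygon V) (convex_latticePolygon V) hleast
  obtain ⟨hpA, hpy⟩ := Prod.mk.inj heq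
  exact ⟨p, hp, Int.cast_injective hpA, by rw [hpA, ← hpy]⟩

lemma exists_max_slope (hright : ∃ q ∈ V, p.1 < q.1) :
    ∃ q ∈ V, p.1 < q.1 ∧ ∃ m : ℝ, (q.2 : ℝ) = p.2 + m * (q.1 - p.1) ∧
      ∀ r ∈ V, p.1 < r.1 → (r.2 : ℝ) ≤ p.2 + m * (r.1 - p.1) := by
  have hpos : ∀ r : ℤ × ℤ, p.1 < r.1 → (0 : ℝ) < r.1 - p.1 :=
    fun r hr => sub_pos.2 (Int.cast_lt.2 hr)
  obtain ⟨q, hq, hmax⟩ := (V.filter (p.1 < ·.1)).exists_max_image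
    (fun r => ((r.2 - p.2) / (r.1 - p.1) : ℝ)) (by simpa [Finset.Nonempty] using hright)
  simp only [Finset.mem_filter] at hq hmax
  refine ⟨q, hq.1, hq.2, (q.2 - p.2) / (q.1 - p.1), ?_, fun r hr hpr => ?_⟩
  · rw [div_mul_cancel₀ _ (hpos q hq.2).ne']
    ring
  · rw [← sub_le_iff_le_add', ← div_le_iff₀ (hpos r hpr)]
    exact hmax r ⟨hr, hpr⟩

lemma le_line_of_fst_lt {r : ℤ × ℤ} {m : ℝ} (hq : q ∈ V) (hr : r ∈ V)
    (hp : upperBoundary (latticePolygon V) p.1 = p.2) (hrp : r.1 < p.1) (hpq : p.1 < q.1)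
    (hm : (q.2 : ℝ) = p.2 + m * (q.1 - p.1)) : (r.2 : ℝ) ≤ p.2 + m * (r.1 - p.1) := by
  have hrp' : (0 : ℝ) < p.1 - r.1 := sub_pos.2 (Int.cast_lt.2 hrp)
  have hpq' : (0 : ℝ) < q.1 - p.1 := sub_pos.2 (Int.cast_lt.2 hpq)
  have hslope : m ≤ (p.2 - r.2) / (p.1 - r.1) := by
    calc m = (q.2 - p.2) / (q.1 - p.1) := by rw [eq_div_iff hpq'.ne', hm]; ring
      _ ≤ (upperBoundary (latticePolygon V) q.1 - p.2) / (q.1 - p.1) := by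
        gcongr; exact le_upperBoundary_of_mem hq
      _ ≤ (p.2 - upperBoundary (latticePolygon V) r.1) / (p.1 - r.1) :=
        hp ▸ (concaveOn_upperBoundary (isCompact_latticePolygon V)
          (convex_latticePolygon V)).slope_anti_adjacent (cast_fst_mem_image_fst hr)
          (cast_fst_mem_image_fst hq) (Int.cast_lt.2 hrp) (Int.cast_lt.2 hpq)
      _ ≤ (p.2 - r.2) / (p.1 - r.1) := by
        gcongr; exact le_upperBoundary_of_mem hr
  rw [le_div_iff₀ hrp'] at hslope
  linarith

lemma upperBoundary_eq_of_supporting_line {m : ℝ} (hp : p ∈ V) (hq : q ∈ V) (hpq : p.1 < q.1)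
    (hm : (q.2 : ℝ) = p.2 + m * (q.1 - p.1))
    (hsupp : ∀ r ∈ V, (r.2 : ℝ) ≤ p.2 + m * (r.1 - p.1)) :
    ∀ x ∈ Set.Icc (p.1 : ℝ) q.1, upperBoundary (latticePolygon V) x = p.2 + m * (x - p.1) := by
  intro x hx
  have hcomp := isCompact_latticePolygon V
  have hconv := convex_latticePolygon V
  have hpq' : (0 : ℝ) < q.1 - p.1 := sub_pos.2 (Int.cast_lt.2 hpq)
  have hedge : (x, p.2 + m * (x - p.1)) ∈ latticePolygon V := by
    have ht : (x - p.1) / (q.1 - p.1) ∈ Set.Icc (0 : ℝ) 1 :=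
      ⟨div_nonneg (sub_nonneg.2 hx.1) hpq'.le,
        (div_le_one hpq').2 (sub_le_sub_right hx.2 _)⟩
    convert hconv.add_smul_sub_mem (mem_latticePolygon hp) (mem_latticePolygon hq) ht using 1
    ext
    · simp [div_mul_cancel₀ _ hpq'.ne']
    · simp only [Prod.snd_add, Prod.smul_snd, Prod.snd_sub, smul_eq_mul, hm]
      field_simp
      ring
  apply le_antisymm
  · have hsupp' : ∀ r ∈ V,
        (LinearMap.snd ℝ ℝ ℝ - m • LinearMap.fst ℝ ℝ ℝ) (r.1, r.2) ≤ (p.2 - m * p.1 : ℝ) := by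
      intro r hr
      simp only [LinearMap.sub_apply, LinearMap.smul_apply, LinearMap.fst_apply,
        LinearMap.snd_apply, smul_eq_mul]
      linarith [hsupp r hr]
    have := le_of_mem_latticePolygon _ hsupp' (mk_upperBoundary_mem hcomp hconv ⟨_, hedge, rfl⟩)
    simp only [LinearMap.sub_apply, LinearMap.smul_apply, LinearMap.fst_apply,
      LinearMap.snd_apply, smul_eq_mul] at this
    linarith
  · exact ((mem_iff_boundary_le hcomp hconv).1 hedge).2.2

lemma exists_edge (hp : p ∈ V) (hpu : upperBoundary (latticePolygon V) p.1 = p.2)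
    (hright : ∃ q ∈ V, p.1 < q.1) :
    ∃ q ∈ V, p.1 < q.1 ∧ upperBoundary (latticePolygon V) q.1 = q.2 ∧ ∃ m : ℝ,
      ∀ x ∈ Set.Icc (p.1 : ℝ) q.1,
        upperBoundary (latticePolygon V) x = p.2 + m * (x - p.1) := by
  obtain ⟨q, hq, hpq, m, hm, hmax⟩ := exists_max_slope hright
  have hsupp : ∀ r ∈ V, (r.2 : ℝ) ≤ p.2 + m * (r.1 - p.1) := by
    intro r hr
    rcases lt_trichotomy r.1 p.1 with h | h | h
    · exact le_line_of_fst_lt hq hr hpu h hpq hm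
    · simpa [h, hpu] using le_upperBoundary_of_mem hr
    · exact hmax r hr h
  have hline := upperBoundary_eq_of_supporting_line hp hq hpq hm hsupp
  exact ⟨q, hq, hpq, (hline q.1 ⟨Int.cast_le.2 hpq.le, le_rfl⟩).trans hm.symm, m, hline⟩

lemma isLatticePath_upperBoundary_of_mem {p : ℤ × ℤ}
    (hI : Prod.fst '' latticePolygon V = Set.Icc (A : ℝ) B) (hp : p ∈ V)
    (hpu : upperBoundary (latticePolygon V) p.1 = p.2) :
    IsLatticePath (upperBoundary (latticePolygon V)) p.1 B := by
  obtain ⟨hpA, hpB⟩ := fst_mem_Icc hI hp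
  rcases hpB.eq_or_lt with h | h
  · exact h ▸ .point hpu
  · obtain ⟨q, hq, hpq, hqu, m, hline⟩ :=
      exists_edge hp hpu (exists_mem_fst_gt hI (hpA.trans hpB) h)
    exact .cons hpq hline (isLatticePath_upperBoundary_of_mem hI hq hqu)
termination_by (B - p.1).toNat
decreasing_by omega

lemma isLatticePath_upperBoundary (hI : Prod.fst '' latticePolygon V = Set.Icc (A : ℝ) B)
    (hAB : A ≤ B) : IsLatticePath (upperBoundary (latticePolygon V)) A B := by
  obtain ⟨p, hp, rfl, hpu⟩ := exists_mem_upperBoundary_left hI hAB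
  exact isLatticePath_upperBoundary_of_mem hI hp hpu

lemma latticePolygon_image_neg_snd (V : Finset (ℤ × ℤ)) :
    latticePolygon (V.image fun p => (p.1, -p.2)) = {z | (z.1, -z.2) ∈ latticePolygon V} := by
  let reflection : (ℝ × ℝ) ≃ₗ[ℝ] ℝ × ℝ := (LinearEquiv.refl ℝ ℝ).prodCongr (LinearEquiv.neg ℝ)
  calc latticePolygon (V.image fun p => (p.1, -p.2)) = reflection '' latticePolygon V := by
        rw [latticePolygon, latticePolygon, ← LinearEquiv.coe_coe,
          LinearMap.image_convexHull, Set.image_image, Finset.coe_image, Set.image_image]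
        simp [reflection]
    _ = {z | (z.1, -z.2) ∈ latticePolygon V} := by
        rw [LinearEquiv.image_eq_preimage_symm]
        rfl

lemma isLatticePath_neg_lowerBoundary (hI : Prod.fst '' latticePolygon V = Set.Icc (A : ℝ) B)
    (hAB : A ≤ B) : IsLatticePath (-lowerBoundary (latticePolygon V)) A B := by
  rw [neg_lowerBoundary, ← latticePolygon_image_neg_snd]
  refine isLatticePath_upperBoundary ?_ hAB
  rw [latticePolygon_image_neg_snd, ← hI]
  ext x
  simp only [Set.mem_image, Prod.exists, exists_and_right, exists_eq_right, Set.mem_ofPred_eq]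
  exact (neg_surjective.exists (p := fun y : ℝ => (x, y) ∈ latticePolygon V)).symm

lemma two_mul_area_latticePolygon (hI : Prod.fst '' latticePolygon V = Set.Icc (A : ℝ) B)
    (hAB : A ≤ B) :
    2 * (volume (latticePolygon V)).toReal =
      floorCeilSum (upperBoundary (latticePolygon V)) A B +
        floorCeilSum (-lowerBoundary (latticePolygon V)) A B := by
  have hAB' : (A : ℝ) ≤ B := Int.cast_le.2 hAB
  have hu := isLatticePath_upperBoundary hI hAB
  have hl := isLatticePath_neg_lowerBoundary hI hAB
  have harea := measure_eq_integral_upperBoundary_sub_lowerBoundary volume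
    (isCompact_latticePolygon V) (convex_latticePolygon V)
    (by rw [hI, ← intervalIntegrable_iff_integrableOn_Icc_of_le hAB']
        simpa using hl.intervalIntegrable.neg)
    (by rw [hI, ← intervalIntegrable_iff_integrableOn_Icc_of_le hAB']
        exact hu.intervalIntegrable)
  rw [Measure.volume_eq_prod, harea, hI, integral_Icc_eq_integral_Ioc,
    ← intervalIntegral.integral_of_le hAB', ← hu.two_mul_integral_eq_floorCeilSum,
    ← hl.two_mul_integral_eq_floorCeilSum, ← mul_add,
    ← intervalIntegral.integral_add hu.intervalIntegrable hl.intervalIntegrable]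
  simp only [Pi.neg_apply, sub_eq_add_neg]

end LatticePolygon

section LatticeCount

/-- The number of lattice points of a planar set; `0` by convention if there are infinitely
many. -/
noncomputable def latticeCount (S : Set (ℝ × ℝ)) : ℕ :=
  {p : ℤ × ℤ | ((p.1 : ℝ), (p.2 : ℝ)) ∈ S}.ncard

lemma latticeCount_frontier_add_interior {P : Set (ℝ × ℝ)} (hP : IsCompact P) :
    latticeCount (frontier P) + latticeCount (interior P) = latticeCount P := by
  have hemb : Topology.IsClosedEmbedding fun p : ℤ × ℤ => ((p.1 : ℝ), (p.2 : ℝ)) :=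
    Int.isClosedEmbedding_coe_real.prodMap Int.isClosedEmbedding_coe_real
  have hsub : {p : ℤ × ℤ | ((p.1 : ℝ), (p.2 : ℝ)) ∈ interior P} ⊆
      {p : ℤ × ℤ | ((p.1 : ℝ), (p.2 : ℝ)) ∈ P} := fun _ hp => interior_subset (s := P) hp
  unfold latticeCount
  rw [hP.isClosed.frontier_eq]
  exact Set.ncard_sdiff_add_ncard_of_subset hsub (hemb.isCompact_preimage hP).finite_of_discrete

lemma ncard_eq_sum_card_of_mem_iff {α β : Type*} {S : Set (α × β)} {I : Finset α}
    {J : α → Finset β} (hS : ∀ p, p ∈ S ↔ p.1 ∈ I ∧ p.2 ∈ J p.1) :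
    S.ncard = ∑ x ∈ I, (J x).card := by
  have himage : S = Equiv.sigmaEquivProd α β '' (I.sigma J : Set (Σ _ : α, β)) := by
    rw [Equiv.image_eq_preimage_symm]
    ext p
    simp [hS, Equiv.sigmaEquivProd]
  rw [himage, Set.ncard_image_of_injective _ (Equiv.injective _), Set.ncard_coe_finset,
    Finset.card_sigma]

variable {P : Set (ℝ × ℝ)} {A B : ℤ}

lemma latticeCount_eq_sum (hcomp : IsCompact P) (hconv : Convex ℝ P)
    (hI : Prod.fst '' P = Set.Icc (A : ℝ) B) :
    (latticeCount P : ℤ) =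
      ∑ x ∈ Finset.Icc A B, (⌊upperBoundary P x⌋ + ⌊(-lowerBoundary P) x⌋ + 1) := by
  have hcolumns : ∀ p : ℤ × ℤ, p ∈ {p : ℤ × ℤ | ((p.1 : ℝ), (p.2 : ℝ)) ∈ P} ↔
      p.1 ∈ Finset.Icc A B ∧
        p.2 ∈ Finset.Icc ⌈lowerBoundary P p.1⌉ ⌊upperBoundary P p.1⌋ := by
    simp [mem_iff_boundary_le hcomp hconv, hI, Int.ceil_le, Int.le_floor]
  rw [latticeCount, ncard_eq_sum_card_of_mem_iff
    (J := fun x : ℤ => Finset.Icc ⌈lowerBoundary P x⌉ ⌊upperBoundary P x⌋) hcolumns, Nat.cast_sum]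
  refine Finset.sum_congr rfl fun x hx => ?_
  have hle := lowerBoundary_le_upperBoundary hcomp hconv (x := (x : ℝ)) (by simpa [hI] using hx)
  have hceil : ⌈lowerBoundary P x⌉ ≤ ⌊upperBoundary P x⌋ + 1 :=
    (Int.ceil_mono hle).trans (Int.ceil_le_floor_add_one _)
  rw [Int.card_Icc, Pi.neg_apply, Int.floor_neg, Int.toNat_of_nonneg (by linarith)]
  ring

lemma latticeCount_interior_eq_sum (hcomp : IsCompact P) (hconv : Convex ℝ P)
    (hne : (interior P).Nonempty) (hI : Prod.fst '' P = Set.Icc (A : ℝ) B) :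
    (latticeCount (interior P) : ℤ) =
      ∑ x ∈ Finset.Ioo A B, (⌈upperBoundary P x⌉ + ⌈(-lowerBoundary P) x⌉ - 1) := by
  have hcolumns : ∀ p : ℤ × ℤ, p ∈ {p : ℤ × ℤ | ((p.1 : ℝ), (p.2 : ℝ)) ∈ interior P} ↔
      p.1 ∈ Finset.Ioo A B ∧
        p.2 ∈ Finset.Ioo ⌊lowerBoundary P p.1⌋ ⌈upperBoundary P p.1⌉ := by
    simp [interior_eq_regionBetween hcomp hconv, regionBetween, hI, Int.floor_lt, Int.lt_ceil]
  rw [latticeCount, ncard_eq_sum_card_of_mem_iff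
    (J := fun x : ℤ => Finset.Ioo ⌊lowerBoundary P x⌋ ⌈upperBoundary P x⌉) hcolumns, Nat.cast_sum]
  refine Finset.sum_congr rfl fun x hx => ?_
  have hlt := lowerBoundary_lt_upperBoundary hcomp hconv hne (x := (x : ℝ))
    (by simpa [hI] using hx)
  have hfloor : ⌊lowerBoundary P x⌋ < ⌈upperBoundary P x⌉ :=
    Int.floor_lt.2 (hlt.trans_le (Int.le_ceil _))
  rw [Int.card_Ioo, Pi.neg_apply, Int.ceil_neg, Int.toNat_of_nonneg (by linarith)]
  ring

lemma latticeCount_add_latticeCount_interior (hcomp : IsCompact P) (hconv : Convex ℝ P)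
    (hne : (interior P).Nonempty) (hI : Prod.fst '' P = Set.Icc (A : ℝ) B) (hAB : A < B)
    (hu : ∃ z : ℤ, upperBoundary P B = z) (hl : ∃ z : ℤ, (-lowerBoundary P) B = z) :
    (latticeCount P + latticeCount (interior P) : ℤ) =
      floorCeilSum (upperBoundary P) A B + floorCeilSum (-lowerBoundary P) A B + 2 := by
  obtain ⟨u, hu⟩ := hu
  obtain ⟨l, hl⟩ := hl
  rw [latticeCount_eq_sum hcomp hconv hI, latticeCount_interior_eq_sum hcomp hconv hne hI,
    floorCeilSum_eq_sum_Icc_add_sum_Ioo hAB hu, floorCeilSum_eq_sum_Icc_add_sum_Ioo hAB hl]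
  simp only [Finset.sum_add_distrib, Finset.sum_sub_distrib, Finset.sum_const, nsmul_eq_mul,
    mul_one, Int.card_Icc, Int.card_Ioo]
  rw [Int.toNat_of_nonneg (by linarith), Int.toNat_of_nonneg (by linarith)]
  ring

lemma latticeCount_add_latticeCount_interior_latticePolygon {V : Finset (ℤ × ℤ)}
    (hne : (interior (latticePolygon V)).Nonempty) :
    (latticeCount (latticePolygon V) + latticeCount (interior (latticePolygon V)) : ℝ) =
      2 * (volume (latticePolygon V)).toReal + 2 := by
  obtain ⟨A, B, hAB, hI⟩ := exists_lt_and_image_fst_latticePolygon_eq_Icc hne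
  rw [two_mul_area_latticePolygon hI hAB.le]
  exact_mod_cast latticeCount_add_latticeCount_interior (isCompact_latticePolygon V)
    (convex_latticePolygon V) hne hI hAB
    (isLatticePath_upperBoundary hI hAB.le).exists_eq_right
    (isLatticePath_neg_lowerBoundary hI hAB.le).exists_eq_right

end LatticeCount

/-- **Pick's Theorem.** For a convex lattice polygon `P` (convex hull of finitely many lattice
points, with nonempty interior), `area(P) = i(P) + b(P)/2 − 1`. -/
theorem stmt4 (V : Finset (ℤ × ℤ)) (P : Set (ℝ × ℝ))
    (hP : P = convexHull ℝ ((fun p : ℤ × ℤ => ((p.1 : ℝ), (p.2 : ℝ))) '' (V : Set (ℤ × ℤ))))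
    (hint : (interior P).Nonempty) :
    (volume P).toReal =
      ({p : ℤ × ℤ | ((p.1 : ℝ), (p.2 : ℝ)) ∈ interior P}.ncard : ℝ) +
        ({p : ℤ × ℤ | ((p.1 : ℝ), (p.2 : ℝ)) ∈ frontier P}.ncard : ℝ) / 2 - 1 := by
  obtain rfl : P = latticePolygon V := hP
  have hcount := latticeCount_add_latticeCount_interior_latticePolygon hint
  have hfrontier : (latticeCount (frontier (latticePolygon V)) +
      latticeCount (interior (latticePolygon V)) : ℝ) = latticeCount (latticePolygon V) :=
    mod_cast latticeCount_frontier_add_interior (isCompact_latticePolygon V)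
  change (volume (latticePolygon V)).toReal = latticeCount (interior (latticePolygon V)) +
    latticeCount (frontier (latticePolygon V)) / 2 - 1
  linarith
end

section
/- Fix positive integers i < n and set j = n − i. Let D_k be the set of tuples ((a_l,b_l))_{l≤k} of pairs of positive integers with a_1+⋯+a_k = i, b_1+⋯+b_k = n, and 1 > a_1/b_1 > ⋯ > a_k/b_k > 0. Then ∑_{k≥1} ∑_{((a_l,b_l)) ∈ D_k} (q−1)^{k−1} q^{1−k} q^{[∑_{1≤l₁<l₂≤k}(a_{l₁} b_{l₂} − a_{l₂} b_{l₁}) + ∑_{1≤l≤k} gcd(a_l,b_l)]/2} = q^{(ij−n)/2 + 1}, as an identity of functions of q (equivalently, of elements of ℚ(q^{1/2}) or after clearing half-integer exponents, of polynomials in q). -/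
open scoped Classical

/-!
Put `q = s ^ 2` and `t = q⁻¹`, and replace `(a, b)` by `(a, b - a)`: the tuples become the edge
sequences of the convex lattice paths from `0` to `V = (i, j)` inside a rectangle. By Pick's
theorem the summand of a path with `k` edges is, up to a factor depending only on `V`, equal to
`(1 - t) ^ (k - 1) * t ^ N`, where `N` is the number of lattice points of the open rectangle
strictly below the path. If all lattice points strictly below the diagonal are deleted
independently with probability `t`, this is the probability that the path is the lower convex hull
of `0`, `V` and the surviving points, so the sum over all paths is `1`.

The induction uncovers this hull edge by edge. A ray rotating upwards about `0`, reading each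
direction from the far end, meets as its first surviving point the end `w` of the first edge; the
remaining edges form the hull in the rectangle with corners `w` and `V`, restricted to slopes
larger than that of `w`.
-/

noncomputable section

namespace HeNieYu

open Finset

/-- The determinant of two lattice vectors. For vectors in the right half-plane, `0 < det v w` says
that `w` has larger slope than `v`. -/
def det (v w : ℤ × ℤ) : ℤ := v.1 * w.2 - v.2 * w.1

lemma det_self (v : ℤ × ℤ) : det v v = 0 := by
  simp only [det]
  ring

lemma det_swap (v w : ℤ × ℤ) : det w v = -det v w := by
  simp only [det]
  ring

lemma det_sub_right (u v w : ℤ × ℤ) : det u (v - w) = det u v - det u w := by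
  simp only [det, Prod.fst_sub, Prod.snd_sub]
  ring

lemma det_sum_right {ι : Type*} (t : Finset ι) (v : ℤ × ℤ) (f : ι → ℤ × ℤ) :
    det v (∑ l ∈ t, f l) = ∑ l ∈ t, det v (f l) := by
  simp only [det, Prod.fst_sum, Prod.snd_sum, sum_sub_distrib, mul_sum]

lemma det_pos_trans {u v w : ℤ × ℤ} (hu : 0 < u.1) (hv : 0 < v.1) (hw : 0 ≤ w.1)
    (huv : 0 ≤ det u v) (hvw : 0 < det v w) : 0 < det u w := by
  have plucker : v.1 * det u w = u.1 * det v w + w.1 * det u v := by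
    simp only [det]
    ring
  refine pos_of_mul_pos_right ?_ hv.le
  rw [plucker]
  positivity

/-- The lattice points in the interior of the rectangle with opposite corners `0` and `V`. -/
def box (V : ℤ × ℤ) : Finset (ℤ × ℤ) := Ioo 0 V.1 ×ˢ Ioo 0 V.2

lemma mem_box {V p : ℤ × ℤ} : p ∈ box V ↔ (0 < p.1 ∧ p.1 < V.1) ∧ 0 < p.2 ∧ p.2 < V.2 := by
  simp only [box, mem_product, mem_Ioo]

lemma card_box {V : ℤ × ℤ} (hV₁ : 0 < V.1) (hV₂ : 0 < V.2) :
    (#(box V) : ℤ) = (V.1 - 1) * (V.2 - 1) := by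
  rw [box, card_product, Int.card_Ioo, Int.card_Ioo, Nat.cast_mul]
  congr 1 <;> lia

/-- The points of `box V` strictly below its diagonal. -/
def belowDiagonal (V : ℤ × ℤ) : Finset (ℤ × ℤ) := {p ∈ box V | 0 < det p V}

/-- The points of `box V` on or below the ray spanned by `v`. -/
def onOrBelow (V v : ℤ × ℤ) : Finset (ℤ × ℤ) := {p ∈ box V | 0 ≤ det p v}

/-- The points of `box V` strictly between the ray spanned by `v` and the diagonal. -/
def between (V v : ℤ × ℤ) : Finset (ℤ × ℤ) := {p ∈ box V | 0 < det v p ∧ 0 < det p V}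

/-- The order in which a ray rotating upwards about the origin meets the points of the right
half-plane: by slope, and from the far end to the origin along each ray. -/
def sweepKey (p : ℤ × ℤ) : ℚ ×ₗ ℤ := toLex ((p.2 : ℚ) / p.1, -p.1)

/-- The points of `box V` met before `w` by the rotating ray of `sweepKey`. -/
def sweptBefore (V w : ℤ × ℤ) : Finset (ℤ × ℤ) := {p ∈ box V | sweepKey p < sweepKey w}

lemma sweepKey_lt_iff {p w : ℤ × ℤ} (hp : 0 < p.1) (hw : 0 < w.1) :
    sweepKey p < sweepKey w ↔ 0 < det p w ∨ det p w = 0 ∧ w.1 < p.1 := by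
  have hp' : (0 : ℚ) < p.1 := mod_cast hp
  have hw' : (0 : ℚ) < w.1 := mod_cast hw
  rw [sweepKey, sweepKey, Prod.Lex.toLex_lt_toLex, div_lt_div_iff₀ hp' hw',
    div_eq_div_iff hp'.ne' hw'.ne', neg_lt_neg_iff, det, sub_pos, sub_eq_zero, mul_comm p.1,
    eq_comm (a := w.2 * p.1)]
  norm_cast

lemma sweepKey_injOn : Set.InjOn sweepKey {p | 0 < p.1} := by
  rintro ⟨x, y⟩ hx ⟨x', y'⟩ - h
  obtain ⟨hslope, rfl⟩ : (y : ℚ) / x = y' / x' ∧ x = x' := by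
    simpa only [sweepKey, EmbeddingLike.apply_eq_iff_eq, Prod.mk.injEq, neg_inj] using h
  have hx' : (x : ℚ) ≠ 0 := mod_cast (ne_of_gt hx : x ≠ 0)
  rw [div_left_inj' hx', Int.cast_inj] at hslope
  rw [hslope]

lemma card_diagonal {V : ℤ × ℤ} (hV₁ : 0 < V.1) (hV₂ : 0 < V.2) :
    (#{p ∈ box V | det p V = 0} : ℤ) = Int.gcd V.1 V.2 - 1 := by
  have hgcd : 0 < Int.gcd V.1 V.2 := Int.gcd_pos_of_ne_zero_left _ hV₁.ne'
  obtain ⟨a, c, hac, ha, hc⟩ := Int.exists_gcd_one hgcd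
  set g : ℤ := (Int.gcd V.1 V.2 : ℤ)
  have hg : 0 < g := Int.natCast_pos.2 hgcd
  have ha₀ : 0 < a := pos_of_mul_pos_left (ha ▸ hV₁) hg.le
  have hc₀ : 0 < c := pos_of_mul_pos_left (hc ▸ hV₂) hg.le
  have himage : ({p ∈ box V | det p V = 0} : Finset (ℤ × ℤ)) =
      (Ioo 0 g).image fun m ↦ (a * m, c * m) := by
    ext ⟨x, y⟩
    simp only [mem_filter, mem_box, mem_image, mem_Ioo, Prod.mk.injEq, det, ha, hc]
    constructor
    · rintro ⟨⟨⟨hx, hxV⟩, -⟩, hdet⟩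
      have hxy : x * c = y * a := mul_right_cancel₀ hg.ne' (by linarith)
      obtain ⟨m, rfl⟩ : a ∣ x := (Int.isCoprime_iff_gcd_eq_one.2 hac).dvd_of_dvd_mul_right
        (Dvd.intro_left y hxy.symm)
      exact ⟨m, ⟨pos_of_mul_pos_right hx ha₀.le, lt_of_mul_lt_mul_left hxV ha₀.le⟩, rfl,
        mul_left_cancel₀ ha₀.ne' (by linarith)⟩
    · rintro ⟨m, ⟨hm, hmg⟩, rfl, rfl⟩
      exact ⟨⟨⟨by positivity, by gcongr⟩, by positivity, by gcongr⟩, by ring⟩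
  have hinj : Function.Injective fun m : ℤ ↦ (a * m, c * m) := fun m m' h ↦
    mul_left_cancel₀ ha₀.ne' (Prod.mk.inj h).1
  rw [himage, card_image_of_injective _ hinj, Int.card_Ioo]
  lia

lemma card_aboveDiagonal (V : ℤ × ℤ) : #{p ∈ box V | det p V < 0} = #(belowDiagonal V) := by
  refine card_equiv (Equiv.subLeft V) fun p ↦ ?_
  have hdet : det (V - p) V = -det p V := by
    rw [det_swap, det_sub_right, det_self, zero_sub, neg_neg, det_swap]
  simp only [belowDiagonal, mem_filter, mem_box, Equiv.subLeft_apply, hdet, Prod.fst_sub,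
    Prod.snd_sub]
  lia

lemma two_mul_card_belowDiagonal {V : ℤ × ℤ} (hV₁ : 0 < V.1) (hV₂ : 0 < V.2) :
    2 * (#(belowDiagonal V) : ℤ) = (V.1 - 1) * (V.2 - 1) - (Int.gcd V.1 V.2 - 1) := by
  have hsplit : #(box V) = #(belowDiagonal V) + #{p ∈ box V | det p V < 0} +
      #{p ∈ box V | det p V = 0} := by
    rw [belowDiagonal, ← card_union_of_disjoint, ← filter_or, ← card_union_of_disjoint,
      ← filter_or, filter_true_of_mem]
    · intros; lia
    · exact disjoint_filter.2 (by intros; lia)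
    · exact disjoint_filter.2 (by intros; lia)
  rw [← card_box hV₁ hV₂, ← card_diagonal hV₁ hV₂, hsplit, card_aboveDiagonal]
  push_cast
  ring

section Swept

variable {V w : ℤ × ℤ}

lemma card_sweptBefore_quadrant (hw₁ : 0 < w.1) (hw₂ : 0 < w.2) :
    #{p ∈ sweptBefore V w | w.1 < p.1 ∧ w.2 < p.2} = #(onOrBelow (V - w) w) := by
  refine (card_equiv (Equiv.addRight w) fun p ↦ ?_).symm
  have hdet : det (p + w) w = det p w := by
    simp only [det, Prod.fst_add, Prod.snd_add]
    ring
  simp only [onOrBelow, sweptBefore, mem_filter, mem_box, Equiv.coe_addRight]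
  constructor
  · rintro ⟨hp, hpw⟩
    rw [sweepKey_lt_iff (by simp only [Prod.fst_add]; lia) hw₁, hdet]
    simp only [Prod.fst_add, Prod.snd_add, Prod.fst_sub, Prod.snd_sub] at hp ⊢
    lia
  · rintro ⟨⟨hp, hpw⟩, hquad⟩
    rw [sweepKey_lt_iff hp.1.1 hw₁, hdet] at hpw
    simp only [Prod.fst_add, Prod.snd_add, Prod.fst_sub, Prod.snd_sub] at hp hquad ⊢
    lia

lemma card_sweptBefore_strip (hw : w ∈ box V) :
    (#{p ∈ sweptBefore V w | w.1 < p.1 ∧ p.2 ≤ w.2} : ℤ) = (V.1 - 1 - w.1) * w.2 := by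
  obtain ⟨⟨hw₁, hwV₁⟩, hw₂, hwV₂⟩ := mem_box.1 hw
  have hstrip : ({p ∈ sweptBefore V w | w.1 < p.1 ∧ p.2 ≤ w.2} : Finset (ℤ × ℤ)) =
      Ioo w.1 V.1 ×ˢ Ioc 0 w.2 := by
    ext ⟨x, y⟩
    simp only [sweptBefore, mem_filter, mem_box, mem_product, mem_Ioo, mem_Ioc]
    constructor
    · lia
    · rintro ⟨⟨hx, hxV⟩, hy, hyw⟩
      have hdet : 0 < det (x, y) w := by
        simp only [det]
        nlinarith
      exact ⟨⟨by lia, (sweepKey_lt_iff (hw₁.trans hx) hw₁).2 (.inl hdet)⟩, hx, hyw⟩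
  rw [hstrip, card_product, Int.card_Ioo, Int.card_Ioc, Nat.cast_mul]
  congr 1 <;> lia

lemma sweptBefore_left (hw : w ∈ box V) :
    {p ∈ sweptBefore V w | p.1 < w.1} = belowDiagonal w := by
  obtain ⟨⟨hw₁, hwV₁⟩, hw₂, hwV₂⟩ := mem_box.1 hw
  ext p
  simp only [sweptBefore, belowDiagonal, mem_filter, mem_box]
  constructor
  · rintro ⟨⟨hp, hpw⟩, hleft⟩
    have hdet : 0 < det p w := by
      rw [sweepKey_lt_iff hp.1.1 hw₁] at hpw
      lia
    refine ⟨⟨⟨hp.1.1, hleft⟩, hp.2.1, ?_⟩, hdet⟩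
    simp only [det] at hdet
    nlinarith
  · rintro ⟨hp, hdet⟩
    exact ⟨⟨by lia, (sweepKey_lt_iff hp.1.1 hw₁).2 (.inl hdet)⟩, hp.1.2⟩

lemma sweptBefore_column (hw : w ∈ box V) :
    {p ∈ sweptBefore V w | p.1 = w.1} = {w.1} ×ˢ Ioo 0 w.2 := by
  obtain ⟨⟨hw₁, hwV₁⟩, -, hwV₂⟩ := mem_box.1 hw
  have det_pos_iff {p : ℤ × ℤ} (hcol : p.1 = w.1) : 0 < det p w ↔ p.2 < w.2 := by
    rw [det, sub_pos, hcol, mul_comm, mul_lt_mul_iff_right₀ hw₁]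
  ext p
  simp only [sweptBefore, mem_filter, mem_box, mem_product, mem_singleton, mem_Ioo]
  refine ⟨fun ⟨⟨hp, hpw⟩, hcol⟩ ↦ ?_, fun ⟨hcol, hp⟩ ↦ ⟨⟨by lia, ?_⟩, hcol⟩⟩
  · rw [sweepKey_lt_iff hp.1.1 hw₁, det_pos_iff hcol] at hpw
    lia
  · exact (sweepKey_lt_iff (hcol ▸ hw₁) hw₁).2 (.inl ((det_pos_iff hcol).2 hp.2))

lemma card_sweptBefore_of_mem_box (hw : w ∈ box V) :
    (#(sweptBefore V w) : ℤ) =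
      #(onOrBelow (V - w) w) + (V.1 - 1 - w.1) * w.2 + #(belowDiagonal w) + (w.2 - 1) := by
  obtain ⟨⟨hw₁, -⟩, hw₂, -⟩ := mem_box.1 hw
  have hcolumn : (#{p ∈ sweptBefore V w | p.1 = w.1} : ℤ) = w.2 - 1 := by
    rw [sweptBefore_column hw, card_product, card_singleton, one_mul, Int.card_Ioo]
    lia
  have hsplit : #(sweptBefore V w) =
      #{p ∈ sweptBefore V w | w.1 < p.1 ∧ w.2 < p.2} +
        #{p ∈ sweptBefore V w | w.1 < p.1 ∧ p.2 ≤ w.2} +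
        #{p ∈ sweptBefore V w | p.1 < w.1} + #{p ∈ sweptBefore V w | p.1 = w.1} := by
    rw [← card_union_of_disjoint, ← filter_or, ← card_union_of_disjoint, ← filter_or,
      ← card_union_of_disjoint, ← filter_or, filter_true_of_mem]
    · intros; lia
    all_goals exact disjoint_filter.2 (by intros; lia)
  rw [hsplit, ← card_sweptBefore_strip hw, ← hcolumn, ← sweptBefore_left hw,
    ← card_sweptBefore_quadrant hw₁ hw₂]
  push_cast
  ring

end Swept

section Telescoping

lemma sum_card_filter_lt {ι κ M : Type*} [LinearOrder κ] [AddCommMonoid M] (key : ι → κ)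
    (φ : ℕ → M) (t : Finset ι) (hkey : Set.InjOn key t) :
    ∑ w ∈ t, φ #{p ∈ t | key p < key w} = ∑ m ∈ range #t, φ m := by
  induction t using Finset.induction_on_max_value key with
  | empty => rfl
  | insert a t ha hmax ih =>
    have hlt : ∀ p ∈ t, key p < key a := fun p hp ↦
      (hmax p hp).lt_of_ne fun h ↦ ha (hkey (by simp [hp]) (by simp) h ▸ hp)
    have hbefore_a : {p ∈ insert a t | key p < key a} = t := by
      rw [filter_insert, if_neg (lt_irrefl _), filter_true_of_mem hlt]
    have hbefore : ∀ w ∈ t, {p ∈ insert a t | key p < key w} = {p ∈ t | key p < key w} :=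
      fun w hw ↦ by rw [filter_insert, if_neg (hmax w hw).not_gt]
    rw [sum_insert ha, card_insert_of_notMem ha, sum_range_succ, hbefore_a, add_comm,
      ← ih (hkey.mono (by simp))]
    congr 1
    exact sum_congr rfl fun w hw ↦ by rw [hbefore w hw]

variable {V v w : ℤ × ℤ}

lemma card_belowDiagonal_of_det_pos (hv : 0 < v.1) (hvV : 0 < det v V) :
    #(belowDiagonal V) = #(onOrBelow V v) + #(between V v) := by
  rw [belowDiagonal, onOrBelow, between, ← card_union_of_disjoint, ← filter_or]
  · refine congrArg card (filter_congr fun p hp ↦ ?_)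
    have hp' := mem_box.1 hp
    have htrans : 0 ≤ det p v → 0 < det p V := fun hpv ↦
      det_pos_trans hp'.1.1 hv (hp'.1.1.trans hp'.1.2).le hpv hvV
    have hswap := det_swap v p
    lia
  · exact disjoint_filter.2 fun p _ ↦ by
      have hswap := det_swap v p
      lia

lemma card_sweptBefore_of_mem_between (hv : 0 < v.1) (hw : w ∈ between V v) :
    #(sweptBefore V w) = #(onOrBelow V v) + #{p ∈ between V v | sweepKey p < sweepKey w} := by
  obtain ⟨hwbox, hvw, hwV⟩ := mem_filter.1 hw
  obtain ⟨⟨hw₁, hwV₁⟩, -⟩ := mem_box.1 hwbox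
  rw [sweptBefore, onOrBelow, between, filter_filter, ← card_union_of_disjoint, ← filter_or]
  · refine congrArg card (filter_congr fun p hp ↦ ?_)
    have hp₁ := (mem_box.1 hp).1.1
    rw [sweepKey_lt_iff hp₁ hw₁]
    have hray : 0 ≤ det p v → 0 < det p w := fun hpv ↦
      det_pos_trans hp₁ hv hw₁.le hpv hvw
    have hdiag : 0 ≤ det p w → 0 < det p V := fun hpw ↦
      det_pos_trans hp₁ hw₁ (hw₁.trans hwV₁).le hpw hwV
    have hswap := det_swap v p
    lia
  · exact disjoint_filter.2 fun p _ ↦ by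
      have hswap := det_swap v p
      lia

/-- When the points of `box V` are deleted independently with probability `t`, the summand at `w` is
the probability that `w` is the first survivor of the sweep, and the right-hand side the
probability that no point on or below the ray of `v` survives. -/
lemma pow_card_belowDiagonal_add_sum {R : Type*} [CommRing R] (t : R) (hv : 0 < v.1)
    (hvV : 0 < det v V) :
    t ^ #(belowDiagonal V) + ∑ w ∈ between V v, (1 - t) * t ^ #(sweptBefore V w) =
      t ^ #(onOrBelow V v) := by
  have hinj : Set.InjOn sweepKey (between V v) := sweepKey_injOn.mono fun p hp ↦
    (mem_box.1 (mem_filter.1 hp).1).1.1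
  have hrank : ∑ w ∈ between V v, (1 - t) * t ^ #{p ∈ between V v | sweepKey p < sweepKey w} =
      1 - t ^ #(between V v) := by
    rw [← mul_sum, sum_card_filter_lt sweepKey (t ^ ·) _ hinj, mul_neg_geom_sum]
  have hswept : ∑ w ∈ between V v, (1 - t) * t ^ #(sweptBefore V w) =
      t ^ #(onOrBelow V v) * (1 - t ^ #(between V v)) := by
    rw [← hrank, mul_sum]
    refine sum_congr rfl fun w hw ↦ ?_
    rw [card_sweptBefore_of_mem_between hv hw]
    ring
  rw [hswept, card_belowDiagonal_of_det_pos hv hvV]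
  ring

end Telescoping

section Chains

/-- The edge sequences of the convex lattice paths with `k` edges from `0` to `V`: both coordinates
of every edge are positive, and the slopes are increasing and larger than the slope of `v`. -/
def chains (k : ℕ) (V v : ℤ × ℤ) : Finset (Fin k → ℤ × ℤ) :=
  {f ∈ Fintype.piFinset fun _ ↦ Icc (1, 1) V |
    ∑ l, f l = V ∧ (∀ l, 0 < det v (f l)) ∧ ∀ l₁ l₂, l₁ < l₂ → 0 < det (f l₁) (f l₂)}

variable {k : ℕ} {V v w : ℤ × ℤ}

lemma mem_chains {f : Fin k → ℤ × ℤ} : f ∈ chains k V v ↔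
    (∀ l, 0 < (f l).1 ∧ 0 < (f l).2) ∧ ∑ l, f l = V ∧ (∀ l, 0 < det v (f l)) ∧
      ∀ l₁ l₂, l₁ < l₂ → 0 < det (f l₁) (f l₂) := by
  simp only [chains, mem_filter, Fintype.mem_piFinset, mem_Icc]
  refine and_congr_left fun ⟨hsum, _⟩ ↦ ⟨fun hf l ↦ (hf l).1, fun hf l ↦ ⟨hf l, ?_⟩⟩
  rw [← hsum]
  exact single_le_sum (f := f) (fun l _ ↦ Prod.mk_le_mk.2 ⟨(hf l).1.le, (hf l).2.le⟩) (mem_univ l)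

lemma pos_of_mem_chains {f : Fin (k + 1) → ℤ × ℤ} (hf : f ∈ chains (k + 1) V v) :
    0 < V.1 ∧ 0 < V.2 ∧ 0 < det v V := by
  obtain ⟨hpos, rfl, hv, -⟩ := mem_chains.1 hf
  rw [Prod.fst_sum, Prod.snd_sum, det_sum_right]
  exact ⟨sum_pos (fun l _ ↦ (hpos l).1) univ_nonempty,
    sum_pos (fun l _ ↦ (hpos l).2) univ_nonempty, sum_pos (fun l _ ↦ hv l) univ_nonempty⟩

lemma cons_mem_chains (hv : 0 < v.1) {f : Fin (k + 1) → ℤ × ℤ} :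
    (Fin.cons w f : Fin (k + 2) → ℤ × ℤ) ∈ chains (k + 2) V v ↔
      w ∈ between V v ∧ f ∈ chains (k + 1) (V - w) w := by
  have hsum : ∑ l, f l = V - w ↔ w + ∑ l, f l = V := eq_sub_iff_add_eq'
  have hbox (hf : f ∈ chains (k + 1) (V - w) w) : w.1 < V.1 ∧ w.2 < V.2 ∧ 0 < det w V := by
    simpa only [Prod.fst_sub, Prod.snd_sub, det_sub_right, det_self, sub_zero, sub_pos]
      using pos_of_mem_chains hf
  simp only [mem_chains, between, mem_filter, mem_box, Fin.forall_fin_succ (n := k + 1),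
    Fin.sum_univ_succ (n := k + 1), Fin.cons_zero, Fin.cons_succ, hsum, Fin.succ_lt_succ_iff,
    Fin.succ_pos, Fin.not_lt_zero, false_imp_iff, true_imp_iff, true_and] at hbox ⊢
  constructor
  · rintro ⟨⟨hw, hf⟩, hV, ⟨hvw, -⟩, hwf, hff⟩
    have := hbox ⟨hf, hV, hwf, hff⟩
    exact ⟨⟨by lia, hvw, this.2.2⟩, hf, hV, hwf, hff⟩
  · rintro ⟨⟨hw, hvw, -⟩, hf, hV, hwf, hff⟩
    exact ⟨⟨⟨hw.1.1, hw.2.1⟩, hf⟩, hV,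
      ⟨hvw, fun l ↦ det_pos_trans hv hw.1.1 (hf l).1.le hvw.le (hwf l)⟩, hwf, hff⟩

lemma chains_one (hV₁ : 0 < V.1) (hV₂ : 0 < V.2) (hvV : 0 < det v V) :
    chains 1 V v = {fun _ ↦ V} := by
  ext f
  simp only [mem_chains, mem_singleton, funext_iff, Fin.forall_fin_one, Fin.sum_univ_one,
    lt_irrefl, false_imp_iff, and_true]
  exact ⟨fun h ↦ h.2.1, fun h ↦ by rw [h]; exact ⟨⟨hV₁, hV₂⟩, rfl, hvV⟩⟩

variable {K : Type*} [Field K]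

/-- The summand of the He–Nie–Yu identity attached to a chain, with `q = s ^ 2`. -/
def weight (s : K) (f : Fin k → ℤ × ℤ) : K :=
  (1 - s ^ (-2 : ℤ)) ^ (k - 1) *
    s ^ ((∑ l₂, ∑ l₁, if l₁ < l₂ then det (f l₁) (f l₂) else 0) +
      ∑ l, (Int.gcd (f l).1 (f l).2 : ℤ))

variable {s : K}

lemma weight_cons (hs : s ≠ 0) (w : ℤ × ℤ) (f : Fin (k + 1) → ℤ × ℤ) :
    weight s (Fin.cons w f : Fin (k + 2) → ℤ × ℤ) =
      (1 - s ^ (-2 : ℤ)) * s ^ (det w (∑ l, f l) + Int.gcd w.1 w.2) * weight s f := by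
  simp only [weight, Fin.sum_univ_succ (n := k + 1), Fin.cons_zero, Fin.cons_succ,
    Fin.not_lt_zero, Fin.succ_pos, Fin.succ_lt_succ_iff, if_true, if_false, sum_const_zero,
    sum_add_distrib, zero_add, det_sum_right, Nat.add_succ_sub_one, add_assoc, zpow_add₀ hs,
    pow_succ]
  ring

lemma sum_weight_chains_add_two (hs : s ≠ 0) (hv : 0 < v.1) :
    ∑ f ∈ chains (k + 2) V v, weight s f =
      ∑ w ∈ between V v, (1 - s ^ (-2 : ℤ)) * s ^ (det w V + Int.gcd w.1 w.2) *
        ∑ f ∈ chains (k + 1) (V - w) w, weight s f := by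
  simp only [mul_sum]
  rw [sum_sigma' (between V v) fun w ↦ chains (k + 1) (V - w) w]
  refine sum_bij' (fun f _ ↦ ⟨f 0, Fin.tail f⟩) (fun wf _ ↦ Fin.cons wf.1 wf.2)
    (fun f hf ↦ ?_) (fun wf hwf ↦ ?_) (fun f _ ↦ Fin.cons_self_tail f) (fun _ _ ↦ rfl)
    (fun f hf ↦ ?_)
  · rw [← Fin.cons_self_tail f, cons_mem_chains hv] at hf
    exact mem_sigma.2 hf
  · rw [mem_sigma] at hwf
    exact (cons_mem_chains hv).2 hwf
  · rw [← Fin.cons_self_tail f, cons_mem_chains hv] at hf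
    have hdet : det (f 0) (∑ l, Fin.tail f l) = det (f 0) V := by
      rw [(mem_chains.1 hf.2).2.1, det_sub_right, det_self, sub_zero]
    rw [← hdet, ← weight_cons hs, Fin.cons_self_tail]

/-- The exponent of `s` in the weighted sum over all chains from `0` to `V`. -/
def topExponent (V : ℤ × ℤ) : ℤ := V.1 * V.2 - V.1 - V.2 + 2

lemma topExponent_sub_card_belowDiagonal (hV₁ : 0 < V.1) (hV₂ : 0 < V.2) :
    topExponent V - 2 * #(belowDiagonal V) = Int.gcd V.1 V.2 := by
  rw [topExponent, two_mul_card_belowDiagonal hV₁ hV₂]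
  ring

lemma topExponent_sub_card_sweptBefore_of_mem_box (hw : w ∈ box V) :
    topExponent V - 2 * #(sweptBefore V w) = det w V + Int.gcd w.1 w.2 +
      (topExponent (V - w) - 2 * #(onOrBelow (V - w) w)) := by
  obtain ⟨⟨hw₁, -⟩, hw₂, -⟩ := mem_box.1 hw
  have hbelow := two_mul_card_belowDiagonal hw₁ hw₂
  rw [card_sweptBefore_of_mem_box hw]
  simp only [topExponent, det, Prod.fst_sub, Prod.snd_sub]
  linarith

theorem sum_weight_chains (hs : s ≠ 0) (m : ℕ) (hm : V.1 ≤ m) (hV₁ : 0 < V.1) (hV₂ : 0 < V.2)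
    (hv : 0 < v.1) (hvV : 0 < det v V) :
    ∑ k ∈ range m, ∑ f ∈ chains (k + 1) V v, weight s f =
      s ^ (topExponent V - 2 * #(onOrBelow V v)) := by
  have hpow (V : ℤ × ℤ) (c : ℕ) :
      s ^ (topExponent V - 2 * c) = s ^ topExponent V * (s ^ (-2 : ℤ)) ^ c := by
    rw [← zpow_natCast, ← zpow_mul, ← zpow_add₀ hs, neg_mul, ← sub_eq_add_neg]
  induction m generalizing V v with
  | zero => exact absurd hm (by simpa using hV₁)
  | succ m ih =>
    have hone : ∑ f ∈ chains 1 V v, weight s f = s ^ (topExponent V - 2 * #(belowDiagonal V)) := by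
      rw [chains_one hV₁ hV₂ hvV, sum_singleton, topExponent_sub_card_belowDiagonal hV₁ hV₂]
      simp [weight]
    have hfirst : ∀ w ∈ between V v,
        (1 - s ^ (-2 : ℤ)) * s ^ (det w V + Int.gcd w.1 w.2) *
          ∑ k ∈ range m, ∑ f ∈ chains (k + 1) (V - w) w, weight s f =
        (1 - s ^ (-2 : ℤ)) * s ^ (topExponent V - 2 * #(sweptBefore V w)) := by
      intro w hw
      obtain ⟨hwbox, -, hwV⟩ := mem_filter.1 hw
      obtain ⟨⟨hw₁, hwV₁⟩, -, hwV₂⟩ := mem_box.1 hwbox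
      rw [ih (by push_cast at hm; simp only [Prod.fst_sub]; lia) (sub_pos.2 hwV₁)
        (sub_pos.2 hwV₂) hw₁ (by rwa [det_sub_right, det_self, sub_zero]), mul_assoc,
        ← zpow_add₀ hs, topExponent_sub_card_sweptBefore_of_mem_box hwbox]
    rw [sum_range_succ', hone, sum_congr rfl fun k _ ↦ sum_weight_chains_add_two hs hv, sum_comm,
      sum_congr rfl fun w hw ↦ (mul_sum _ _ _).symm.trans (hfirst w hw)]
    simp only [hpow, mul_left_comm _ (s ^ topExponent V), ← mul_sum, ← mul_add]
    rw [← pow_card_belowDiagonal_add_sum _ hv hvV, mul_sum, add_comm]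

end Chains

section Slopes

/-- The tuples of the He–Nie–Yu identity: `k` pairs of positive integers `(a, b)` with sum `(i, n)`
and decreasing slopes `a / b` in the open unit interval. -/
def slopeTuples (i n k : ℕ) : Finset (Fin k → ℕ × ℕ) :=
  (Fintype.piFinset (fun _ : Fin k => Finset.Icc ((1 : ℕ), (1 : ℕ)) (i, n))).filter
    (fun f : Fin k → ℕ × ℕ =>
      (∀ l, 0 < (f l).1 ∧ 0 < (f l).2) ∧ (∑ l, (f l).1 = i) ∧ (∑ l, (f l).2 = n) ∧
      (∀ l, ((f l).1 : ℚ) / ((f l).2 : ℚ) < 1) ∧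
      (∀ l, 0 < ((f l).1 : ℚ) / ((f l).2 : ℚ)) ∧
      (∀ l₁ l₂ : Fin k, l₁ < l₂ →
        ((f l₂).1 : ℚ) / ((f l₂).2 : ℚ) < ((f l₁).1 : ℚ) / ((f l₁).2 : ℚ)))

variable {i n k : ℕ}

lemma mem_slopeTuples {f : Fin k → ℕ × ℕ} : f ∈ slopeTuples i n k ↔
    (∀ l, 0 < (f l).1 ∧ (f l).1 < (f l).2) ∧ ∑ l, (f l).1 = i ∧ ∑ l, (f l).2 = n ∧
      ∀ l₁ l₂, l₁ < l₂ → (f l₂).1 * (f l₁).2 < (f l₁).1 * (f l₂).2 := by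
  simp only [slopeTuples, mem_filter, Fintype.mem_piFinset, mem_Icc]
  constructor
  · rintro ⟨-, hpos, hi, hn, hlt, -, hslope⟩
    have hb l : (0 : ℚ) < (f l).2 := mod_cast (hpos l).2
    refine ⟨fun l ↦ ⟨(hpos l).1, mod_cast (div_lt_one (hb l)).1 (hlt l)⟩, hi, hn,
      fun l₁ l₂ h ↦ ?_⟩
    exact_mod_cast (div_lt_div_iff₀ (hb l₂) (hb l₁)).1 (hslope l₁ l₂ h)
  · rintro ⟨hpos, rfl, rfl, hslope⟩
    have ha l : (0 : ℚ) < (f l).1 := mod_cast (hpos l).1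
    have hb l : (0 : ℚ) < (f l).2 := mod_cast (hpos l).1.trans (hpos l).2
    refine ⟨fun l ↦ ⟨⟨(hpos l).1, (hpos l).1.trans (hpos l).2⟩,
        single_le_sum (f := fun l ↦ (f l).1) (fun _ _ ↦ Nat.zero_le _) (mem_univ l),
        single_le_sum (f := fun l ↦ (f l).2) (fun _ _ ↦ Nat.zero_le _) (mem_univ l)⟩,
      fun l ↦ ⟨(hpos l).1, (hpos l).1.trans (hpos l).2⟩, rfl, rfl,
      fun l ↦ (div_lt_one (hb l)).2 (mod_cast (hpos l).2), fun l ↦ div_pos (ha l) (hb l),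
      fun l₁ l₂ h ↦ (div_lt_div_iff₀ (hb l₂) (hb l₁)).2 (mod_cast hslope l₁ l₂ h)⟩

/-- The change of coordinates `(a, b) ↦ (a, b - a)`. It preserves determinants and gcds, and turns
`0 < a < b` into positivity of both coordinates. -/
def shear (p : ℕ × ℕ) : ℤ × ℤ := (p.1, p.2 - p.1)

lemma shear_injective : Function.Injective shear := by
  rintro ⟨a, b⟩ ⟨a', b'⟩ h
  simp only [shear, Prod.mk.injEq] at h ⊢
  lia

lemma exists_shear_eq {p : ℤ × ℤ} (hp₁ : 0 ≤ p.1) (hp₂ : 0 ≤ p.2) : ∃ r, shear r = p :=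
  ⟨(p.1.toNat, (p.1 + p.2).toNat), Prod.ext (Int.toNat_of_nonneg hp₁)
    (by simp only [shear]; lia)⟩

lemma det_shear (p r : ℕ × ℕ) : det (shear p) (shear r) = p.1 * r.2 - r.1 * p.2 := by
  simp only [det, shear]
  ring

lemma gcd_shear (p : ℕ × ℕ) : Int.gcd (shear p).1 (shear p).2 = Nat.gcd p.1 p.2 := by
  rw [shear, Int.gcd_sub_self_right, Int.gcd_natCast_natCast]

lemma shear_comp_mem_chains_iff {f : Fin k → ℕ × ℕ} :
    shear ∘ f ∈ chains k (i, (n : ℤ) - i) (1, 0) ↔ f ∈ slopeTuples i n k := by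
  have hdet (p : ℤ × ℤ) : det (1, 0) p = p.2 := by simp [det]
  have hpos (p : ℕ × ℕ) : (0 < (shear p).1 ∧ 0 < (shear p).2) ↔ 0 < p.1 ∧ p.1 < p.2 := by
    simp only [shear]
    lia
  have hsum : ∑ l, shear (f l) = ((i : ℤ), (n : ℤ) - i) ↔ ∑ l, (f l).1 = i ∧ ∑ l, (f l).2 = n := by
    simp only [Prod.ext_iff, Prod.fst_sum, Prod.snd_sum, shear, sum_sub_distrib, ← Nat.cast_sum]
    lia
  have hslope (l₁ l₂) : 0 < det (shear (f l₁)) (shear (f l₂)) ↔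
      (f l₂).1 * (f l₁).2 < (f l₁).1 * (f l₂).2 := by
    rw [det_shear, sub_pos]
    norm_cast
  simp only [mem_chains, mem_slopeTuples, Function.comp_apply, hdet, hpos, hsum, hslope]
  refine and_congr_right fun hf ↦ ?_
  rw [and_iff_right fun l ↦ ((hpos (f l)).2 (hf l)).2, and_assoc]

lemma sum_slopeTuples {M : Type*} [AddCommMonoid M] (φ : (Fin k → ℤ × ℤ) → M) :
    ∑ f ∈ slopeTuples i n k, φ (shear ∘ f) = ∑ f ∈ chains k (i, (n : ℤ) - i) (1, 0), φ f := by
  refine sum_nbij (shear ∘ ·) (fun f hf ↦ shear_comp_mem_chains_iff.2 hf)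
    (shear_injective.comp_left.injOn) (fun f hf ↦ ?_) (fun _ _ ↦ rfl)
  have hpos := (mem_chains.1 hf).1
  choose r hr using fun l ↦ exists_shear_eq (hpos l).1.le (hpos l).2.le
  obtain rfl : shear ∘ r = f := funext hr
  exact ⟨r, shear_comp_mem_chains_iff.1 hf, rfl⟩

lemma weight_shear_comp {K : Type*} [Field K] {s : K} (hs : s ≠ 0) (f : Fin (k + 1) → ℕ × ℕ) :
    weight s (shear ∘ f) = (s ^ 2 - 1) ^ k *
      s ^ (-2 * (k : ℤ) +
        ((∑ l₂, ∑ l₁, if l₁ < l₂ then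
            ((f l₁).1 : ℤ) * (f l₂).2 - (f l₂).1 * (f l₁).2 else 0) +
          ∑ l, (Nat.gcd (f l).1 (f l).2 : ℤ))) := by
  have hq : 1 - s ^ (-2 : ℤ) = (s ^ 2 - 1) * s ^ (-2 : ℤ) := by
    rw [sub_mul, one_mul, ← zpow_natCast, ← zpow_add₀ hs]
    norm_num
  simp only [weight, Function.comp_apply, det_shear, gcd_shear, Nat.add_sub_cancel]
  rw [hq, mul_pow, ← zpow_natCast (s ^ (-2 : ℤ)), ← zpow_mul, mul_assoc, ← zpow_add₀ hs]

end Slopes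

lemma onOrBelow_horizontal (V : ℤ × ℤ) : onOrBelow V (1, 0) = ∅ := by
  refine filter_eq_empty_iff.2 fun p hp ↦ ?_
  have hp₂ := (mem_box.1 hp).2.1
  simp only [det]
  lia

lemma sqrt_zpow {q : ℝ} (hq : 0 ≤ q) (m : ℤ) : √q ^ m = q ^ ((m : ℝ) / 2) := by
  rw [Real.rpow_div_two_eq_sqrt _ hq, Real.rpow_intCast]

end HeNieYu

end

open HeNieYu Finset in
theorem stmt11_general {K : Type*} [Field K] {s : K} (hs : s ≠ 0) {i n : ℕ} (hi : 0 < i)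
    (hin : i < n) :
    ∑ k ∈ Icc 1 n, ∑ f ∈ slopeTuples i n k,
      (s ^ 2 - 1) ^ (k - 1) *
        s ^ (2 * (1 - (k : ℤ)) +
          ((∑ l₂, ∑ l₁, if l₁ < l₂ then
              ((f l₁).1 : ℤ) * (f l₂).2 - (f l₂).1 * (f l₁).2 else 0) +
            ∑ l, (Nat.gcd (f l).1 (f l).2 : ℤ))) =
      s ^ ((i : ℤ) * (n - i) - n + 2) := by
  have hchains := sum_weight_chains (V := (i, (n : ℤ) - i)) (v := (1, 0)) hs n
    (Int.ofNat_le.2 hin.le) (Int.natCast_pos.2 hi) (sub_pos.2 (mod_cast hin)) one_pos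
    (by simpa [det] using hin)
  have htop : topExponent (i, (n : ℤ) - i) = (i : ℤ) * (n - i) - n + 2 := by
    simp only [topExponent]
    ring
  rw [onOrBelow_horizontal, card_empty, Nat.cast_zero, mul_zero, sub_zero, htop] at hchains
  rw [← hchains, ← Ico_add_one_right_eq_Icc, sum_Ico_eq_sum_range, Nat.add_sub_cancel]
  refine sum_congr rfl fun k _ ↦ ?_
  rw [add_comm 1 k, ← sum_slopeTuples]
  refine sum_congr rfl fun f _ ↦ ?_
  rw [weight_shear_comp hs, Nat.add_sub_cancel]
  congr 3
  push_cast
  ring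

/-- The He–Nie–Yu identity (Proposition 1.1): for positive integers `i < n`, `j = n − i`,
`∑_{k≥1} ∑_{((a_l,b_l)) ∈ D_k} (q−1)^{k−1} q^{1−k+[∑_{l₁<l₂}(a_{l₁}b_{l₂}−a_{l₂}b_{l₁})
  + ∑_l gcd(a_l,b_l)]/2} = q^{(ij−n)/2+1}`,
stated for all real `q > 0` using real exponents (`rpow`).  `D_k` is the finite set of tuples of
pairs of positive integers with `∑ a_l = i`, `∑ b_l = n`, and `1 > a₁/b₁ > ⋯ > a_k/b_k > 0`;
it is empty for `k > n`, so the outer sum may be taken over `1 ≤ k ≤ n`. -/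
theorem stmt11 (i n : ℕ) (hi : 0 < i) (hin : i < n) (j : ℕ) (hj : j = n - i) :
    ∀ q : ℝ, 0 < q →
      (∑ k ∈ Finset.Icc 1 n,
        ∑ f ∈ (Fintype.piFinset (fun _ : Fin k => Finset.Icc ((1 : ℕ), (1 : ℕ)) (i, n))).filter
          (fun f : Fin k → ℕ × ℕ =>
            (∀ l, 0 < (f l).1 ∧ 0 < (f l).2) ∧ (∑ l, (f l).1 = i) ∧ (∑ l, (f l).2 = n) ∧
            (∀ l, ((f l).1 : ℚ) / ((f l).2 : ℚ) < 1) ∧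
            (∀ l, 0 < ((f l).1 : ℚ) / ((f l).2 : ℚ)) ∧
            (∀ l₁ l₂ : Fin k, l₁ < l₂ →
              ((f l₂).1 : ℚ) / ((f l₂).2 : ℚ) < ((f l₁).1 : ℚ) / ((f l₁).2 : ℚ))),
          (q - 1) ^ (k - 1) *
            q ^ ((1 - (k : ℝ)) +
              ((∑ l₂ : Fin k, ∑ l₁ : Fin k, if l₁ < l₂ then
                  ((f l₁).1 : ℝ) * ((f l₂).2 : ℝ) - ((f l₂).1 : ℝ) * ((f l₁).2 : ℝ) else 0)
                + ∑ l, (Nat.gcd (f l).1 (f l).2 : ℝ)) / 2))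
      = q ^ (((i : ℝ) * (j : ℝ) - (n : ℝ)) / 2 + 1) := by
  intro q hq
  simpa [HeNieYu.slopeTuples, HeNieYu.sqrt_zpow hq.le, hq.le, add_div, hj, hin.le] using
    stmt11_general (Real.sqrt_ne_zero'.2 hq) hi hin
end

section
/- Fix positive integers i, j and n = i + j. With C_k the set of convex (k+1)-gons with lattice vertices contained in the triangle Δ (vertices (0,0),(i,0),(i,j)), having the segment L from (0,0) to (i,j) as an edge and avoiding the horizontal/vertical edges of Δ except at the endpoints, one has ∑_{k≥1} ∑_{P∈C_k} (q−1)^{k−1} q^{−(k−1)} q^{i(P)+b(P)} = q^{i(Δ)+b(Δ)−(n−1)}, as an identity of rational functions in q. -/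
open scoped Classical

/-!
Let `T` be the set of lattice points of `Δ` off its legs and off `L`, and let `B` be the pair of
endpoints of `L`. Expand `q ^ #T = ∑ A ⊆ T, (q - 1) ^ #A` and group the subsets `A` according to the
polygon `P = conv (A ∪ B)`, which always has `L` as an edge. By the Krein–Milman theorem, `A` spans
`P` together with `B` exactly when it contains the vertices of `P` outside `B` and lies in `P`, so
`P` contributes `(q - 1) ^ (k - 1) * q ^ (#(P ∩ T) - (k - 1))`. The formula follows by counting
lattice points: `i(P) + b(P) = #(P ∩ T) + #L` and `i(Δ) + b(Δ) = #T + #L + (n - 1)`.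
-/

section Hull

variable {ι E : Type*} [AddCommGroup E] [Module ℝ E] {p : ι → E} {A B : Finset ι} {a : ι}

/-- The convex hull of a finite set of points of `E`, the points being given by their indices. -/
def hullOf (p : ι → E) (A : Finset ι) : Set E := convexHull ℝ (p '' A)

/-- The (indices of the) vertices of the polytope spanned by the points `p a`, `a ∈ A`. -/
noncomputable def hullVertices (p : ι → E) (A : Finset ι) : Finset ι :=
  {a ∈ A | p a ∈ (hullOf p A).extremePoints ℝ}

theorem convex_hullOf (p : ι → E) (A : Finset ι) : Convex ℝ (hullOf p A) :=
  convex_convexHull ℝ _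

theorem mem_hullOf (ha : a ∈ A) : p a ∈ hullOf p A :=
  subset_convexHull ℝ _ ⟨a, ha, rfl⟩

theorem hullOf_subset_iff {s : Set E} (hs : Convex ℝ s) :
    hullOf p A ⊆ s ↔ ∀ a ∈ A, p a ∈ s := by
  rw [hullOf, hs.convexHull_subset_iff, Set.image_subset_iff]
  rfl

theorem hullOf_mono (h : A ⊆ B) : hullOf p A ⊆ hullOf p B :=
  (hullOf_subset_iff (convex_hullOf p B)).2 fun _ ha ↦ mem_hullOf (h ha)

theorem hullVertices_subset : hullVertices p A ⊆ A :=
  Finset.filter_subset _ _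

theorem image_hullVertices (p : ι → E) (A : Finset ι) :
    p '' hullVertices p A = (hullOf p A).extremePoints ℝ := by
  refine subset_antisymm ?_ fun x hx ↦ ?_
  · rintro _ ⟨a, ha, rfl⟩
    exact (Finset.mem_filter.1 ha).2
  · obtain ⟨a, ha, rfl⟩ := extremePoints_convexHull_subset hx
    exact ⟨a, Finset.mem_filter.2 ⟨ha, hx⟩, rfl⟩

theorem mem_hullVertices (hp : p.Injective) :
    a ∈ hullVertices p A ↔ p a ∈ (hullOf p A).extremePoints ℝ := by
  rw [← image_hullVertices, hp.mem_set_image, Finset.mem_coe]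

theorem hullVertices_congr (hp : p.Injective) (h : hullOf p A = hullOf p B) :
    hullVertices p A = hullVertices p B := by
  ext a
  rw [mem_hullVertices hp, mem_hullVertices hp, h]

theorem inter_hullVertices_subset [DecidableEq ι] (h : A ⊆ B) :
    A ∩ hullVertices p B ⊆ hullVertices p A := by
  intro a ha
  obtain ⟨haA, haB⟩ := Finset.mem_inter.1 ha
  exact Finset.mem_filter.2 ⟨haA, inter_extremePoints_subset_extremePoints_of_subset
    (hullOf_mono h) ⟨mem_hullOf haA, (Finset.mem_filter.1 haB).2⟩⟩

variable [TopologicalSpace E] [T2Space E] [IsTopologicalAddGroup E] [ContinuousSMul ℝ E]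

theorem isClosed_hullOf (p : ι → E) (A : Finset ι) : IsClosed (hullOf p A) :=
  (A.finite_toSet.image p).isClosed_convexHull ℝ

variable [LocallyConvexSpace ℝ E]

theorem hullOf_hullVertices (p : ι → E) (A : Finset ι) :
    hullOf p (hullVertices p A) = hullOf p A := by
  have hcompact : IsCompact (hullOf p A) := (A.finite_toSet.image p).isCompact_convexHull ℝ
  rw [← closure_convexHull_extremePoints hcompact (convex_hullOf p A), ← image_hullVertices]
  exact (isClosed_hullOf p _).closure_eq.symm

theorem hullVertices_hullVertices (hp : p.Injective) (A : Finset ι) :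
    hullVertices p (hullVertices p A) = hullVertices p A :=
  hullVertices_congr hp (hullOf_hullVertices p A)

variable [DecidableEq ι]

theorem mem_hullVertices_iff_notMem_hullOf_erase (hp : p.Injective) (ha : a ∈ A) :
    a ∈ hullVertices p A ↔ p a ∉ hullOf p (A.erase a) := by
  refine ⟨fun hvert hmem ↦ ?_, fun hmem ↦ ?_⟩
  · have hull_eq : hullOf p (A.erase a) = hullOf p A := by
      refine subset_antisymm (hullOf_mono (A.erase_subset a))
        ((hullOf_subset_iff (convex_hullOf _ _)).2 fun b hb ↦ ?_)
      obtain rfl | hba := eq_or_ne b a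
      · exact hmem
      · exact mem_hullOf (Finset.mem_erase.2 ⟨hba, hb⟩)
    rw [← hullVertices_congr hp hull_eq] at hvert
    exact A.notMem_erase a (hullVertices_subset hvert)
  · by_contra hvert
    have hsub : hullVertices p A ⊆ A.erase a :=
      Finset.subset_erase.2 ⟨hullVertices_subset, hvert⟩
    apply hmem
    apply hullOf_mono hsub
    rw [hullOf_hullVertices]
    exact mem_hullOf ha

theorem hullVertices_eq_self_iff (hp : p.Injective) :
    hullVertices p A = A ↔ ∀ a ∈ A, p a ∉ hullOf p (A.erase a) := by
  rw [hullVertices, Finset.filter_eq_self]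
  refine forall₂_congr fun a ha ↦ ?_
  rw [← mem_hullVertices hp, mem_hullVertices_iff_notMem_hullOf_erase hp ha]

end Hull

section Expansion

theorem sum_Icc_pow_card {ι R : Type*} [DecidableEq ι] [CommSemiring R] (x : R) {W U : Finset ι}
    (h : W ⊆ U) :
    ∑ A ∈ Finset.Icc W U, x ^ A.card = x ^ W.card * (x + 1) ^ (U \ W).card := by
  have hdisj : ∀ A ∈ (U \ W).powerset, Disjoint W A := fun A hA ↦
    Finset.disjoint_of_subset_right (Finset.mem_powerset.1 hA) Finset.disjoint_sdiff
  have hinj : Set.InjOn (W ∪ ·) ((U \ W).powerset : Set (Finset ι)) := fun A hA A' hA' h ↦ by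
    simpa only [Finset.union_sdiff_cancel_left (hdisj _ hA),
      Finset.union_sdiff_cancel_left (hdisj _ hA')] using congrArg (· \ W) h
  rw [Finset.Icc_eq_image_powerset h, Finset.sum_image hinj]
  calc ∑ A ∈ (U \ W).powerset, x ^ (W ∪ A).card
      = ∑ A ∈ (U \ W).powerset, x ^ W.card * x ^ A.card :=
        Finset.sum_congr rfl fun A hA ↦ by rw [Finset.card_union_of_disjoint (hdisj A hA), pow_add]
    _ = x ^ W.card * (x + 1) ^ (U \ W).card := by
        simpa only [one_pow, mul_one, Finset.mul_sum] using
          congrArg (x ^ W.card * ·) (Finset.sum_pow_mul_eq_add_pow x 1 (U \ W))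

variable {ι E : Type*} [AddCommGroup E] [Module ℝ E] {p : ι → E} {T B V : Finset ι}

/-- The points of `T` in the polytope spanned by `V`. -/
noncomputable def pointsInHull (p : ι → E) (T V : Finset ι) : Finset ι :=
  {t ∈ T | p t ∈ hullOf p V}

variable [DecidableEq ι]

/-- The polytopes with vertices in `T ∪ B` having every point of `B` as a vertex, each encoded by
its set of vertices. -/
noncomputable def polytopesThrough (p : ι → E) (T B : Finset ι) : Finset (Finset ι) :=
  {V ∈ (T ∪ B).powerset | B ⊆ V ∧ hullVertices p V = V}

theorem mem_polytopesThrough :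
    V ∈ polytopesThrough p T B ↔ V ⊆ T ∪ B ∧ B ⊆ V ∧ hullVertices p V = V := by
  rw [polytopesThrough, Finset.mem_filter, Finset.mem_powerset]

theorem sdiff_subset_pointsInHull (hV : V ∈ polytopesThrough p T B) :
    V \ B ⊆ pointsInHull p T V := fun v hv ↦ by
  obtain ⟨hvV, hvB⟩ := Finset.mem_sdiff.1 hv
  have hvTB := (mem_polytopesThrough.1 hV).1 hvV
  exact Finset.mem_filter.2 ⟨(Finset.mem_union.1 hvTB).resolve_right hvB, mem_hullOf hvV⟩

variable [TopologicalSpace E] [T2Space E] [IsTopologicalAddGroup E] [ContinuousSMul ℝ E]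
  [LocallyConvexSpace ℝ E]

theorem filter_hullVertices_union_eq_Icc (hp : p.Injective) (hV : V ∈ polytopesThrough p T B) :
    {A ∈ T.powerset | hullVertices p (A ∪ B) = V} =
      Finset.Icc (V \ B) (pointsInHull p T V) := by
  obtain ⟨-, hBV, hvert⟩ := mem_polytopesThrough.1 hV
  ext A
  rw [Finset.mem_filter, Finset.mem_powerset, Finset.mem_Icc]
  constructor
  · rintro ⟨hAT, rfl⟩
    refine ⟨sdiff_le_iff'.2 hullVertices_subset, fun a ha ↦ Finset.mem_filter.2 ⟨hAT ha, ?_⟩⟩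
    rw [hullOf_hullVertices]
    exact mem_hullOf (Finset.mem_union_left B ha)
  · rintro ⟨hVA, hAV⟩
    refine ⟨hAV.trans (Finset.filter_subset _ _), ?_⟩
    rw [← hvert]
    refine hullVertices_congr hp (subset_antisymm ?_ (hullOf_mono (sdiff_le_iff'.1 hVA)))
    refine (hullOf_subset_iff (convex_hullOf p V)).2 fun a ha ↦ ?_
    rcases Finset.mem_union.1 ha with ha | ha
    · exact (Finset.mem_filter.1 (hAV ha)).2
    · exact mem_hullOf (hBV ha)

theorem hullVertices_union_mem_polytopesThrough (hp : p.Injective)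
    (hB : B ⊆ hullVertices p (T ∪ B)) {A : Finset ι} (hA : A ⊆ T) :
    hullVertices p (A ∪ B) ∈ polytopesThrough p T B := by
  have hsub : A ∪ B ⊆ T ∪ B := Finset.union_subset_union_left hA
  refine mem_polytopesThrough.2
    ⟨hullVertices_subset.trans hsub, ?_, hullVertices_hullVertices hp _⟩
  exact (Finset.subset_inter Finset.subset_union_right hB).trans (inter_hullVertices_subset hsub)

theorem sum_polytopesThrough {R : Type*} [CommSemiring R] (x : R) (hp : p.Injective)
    (hB : B ⊆ hullVertices p (T ∪ B)) :
    ∑ V ∈ polytopesThrough p T B,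
        x ^ (V \ B).card * (x + 1) ^ (pointsInHull p T V \ (V \ B)).card =
      (x + 1) ^ T.card :=
  calc ∑ V ∈ polytopesThrough p T B,
        x ^ (V \ B).card * (x + 1) ^ (pointsInHull p T V \ (V \ B)).card
      = ∑ V ∈ polytopesThrough p T B,
          ∑ A ∈ T.powerset with hullVertices p (A ∪ B) = V, x ^ A.card :=
        Finset.sum_congr rfl fun V hV ↦ by
          rw [filter_hullVertices_union_eq_Icc hp hV,
            sum_Icc_pow_card x (sdiff_subset_pointsInHull hV)]
    _ = ∑ A ∈ T.powerset, x ^ A.card :=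
        Finset.sum_fiberwise_of_maps_to (fun A hA ↦
          hullVertices_union_mem_polytopesThrough hp hB (Finset.mem_powerset.1 hA)) _
    _ = (x + 1) ^ T.card := by
        simpa only [one_pow, mul_one] using Finset.sum_pow_mul_eq_add_pow x 1 T

end Expansion

section LatticePoints

/-- The embedding of the lattice `ℤ²` into the plane. -/
def toPlane (v : ℤ × ℤ) : ℝ × ℝ := (v.1, v.2)

/-- The number `i(S)` of lattice points in the interior of `S`; the junk value `0` if infinite. -/
noncomputable def interiorCount (S : Set (ℝ × ℝ)) : ℕ :=
  {v : ℤ × ℤ | toPlane v ∈ interior S}.ncard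

/-- The number `b(S)` of lattice points on the boundary of `S`; the junk value `0` if infinite. -/
noncomputable def boundaryCount (S : Set (ℝ × ℝ)) : ℕ :=
  {v : ℤ × ℤ | toPlane v ∈ frontier S}.ncard

theorem toPlane_injective : toPlane.Injective := fun v w h ↦ by
  simpa only [toPlane, Prod.ext_iff, Int.cast_inj] using h

theorem interiorCount_add_boundaryCount {S : Set (ℝ × ℝ)} (hS : IsClosed S) {F : Finset (ℤ × ℤ)}
    (hF : ∀ v, toPlane v ∈ S ↔ v ∈ F) : interiorCount S + boundaryCount S = F.card := by
  have hpoints : toPlane ⁻¹' S = F := Set.ext hF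
  have hfrontier : {v | toPlane v ∈ frontier S} =
      toPlane ⁻¹' S \ {v | toPlane v ∈ interior S} := by
    rw [hS.frontier_eq]
    rfl
  have hinterior : {v | toPlane v ∈ interior S} ⊆ (F : Set (ℤ × ℤ)) :=
    hpoints ▸ Set.preimage_mono interior_subset
  rw [interiorCount, boundaryCount, hfrontier, add_comm, hpoints,
    Set.ncard_sdiff_add_ncard_of_subset hinterior F.finite_toSet, Set.ncard_coe_finset]

theorem convex_halfPlane (a b d : ℝ) : Convex ℝ {z : ℝ × ℝ | a * z.1 + b * z.2 ≤ d} :=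
  convex_halfSpace_le (a • LinearMap.fst ℝ ℝ ℝ + b • LinearMap.snd ℝ ℝ ℝ).isLinear d

theorem le_of_toPlane_mem_hullOf {V : Finset (ℤ × ℤ)} {v : ℤ × ℤ}
    (hv : toPlane v ∈ hullOf toPlane V) (a b d : ℤ)
    (h : ∀ w ∈ V, a * w.1 + b * w.2 ≤ d) : a * v.1 + b * v.2 ≤ d := by
  have hhull : hullOf toPlane V ⊆ {z | (a : ℝ) * z.1 + b * z.2 ≤ d} :=
    (hullOf_subset_iff (convex_halfPlane a b d)).2 fun w hw ↦ by
      simpa only [toPlane, Set.mem_ofPred_eq] using mod_cast h w hw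
  have hv' : (a : ℝ) * v.1 + b * v.2 ≤ d := hhull hv
  exact mod_cast hv'

theorem convexHull_rightTriangle {a b : ℝ} (ha : 0 < a) (hb : 0 < b) :
    convexHull ℝ {(0, 0), (a, 0), (a, b)} =
      {z : ℝ × ℝ | 0 ≤ z.2 ∧ z.1 ≤ a ∧ a * z.2 ≤ b * z.1} := by
  have hinter : {z : ℝ × ℝ | 0 ≤ z.2 ∧ z.1 ≤ a ∧ a * z.2 ≤ b * z.1} =
      {z | 0 * z.1 + -1 * z.2 ≤ 0} ∩
        ({z | 1 * z.1 + 0 * z.2 ≤ a} ∩ {z | -b * z.1 + a * z.2 ≤ 0}) := by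
    ext z
    simp
  refine subset_antisymm (convexHull_min ?_ ?_) ?_
  · simp [Set.insert_subset_iff, ha.le, hb.le, mul_nonneg, mul_comm]
  · rw [hinter]
    exact (convex_halfPlane _ _ _).inter ((convex_halfPlane _ _ _).inter (convex_halfPlane _ _ _))
  · rintro ⟨x, y⟩ ⟨hy, hx, hxy⟩
    have hweights : y / b ≤ x / a := by rwa [div_le_div_iff₀ hb ha, mul_comm, mul_comm x]
    have hcomb : (x, y) = ∑ k, ![1 - x / a, x / a - y / b, y / b] k •
        (![(0, 0), (a, 0), (a, b)] k : ℝ × ℝ) := by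
      simp only [Fin.sum_univ_three, Matrix.cons_val, Prod.smul_mk, Prod.mk_add_mk, smul_eq_mul,
        mul_zero, add_zero, zero_add, Prod.mk.injEq]
      constructor
      · field_simp
        ring
      · field_simp
    rw [hcomb]
    refine (convex_convexHull ℝ _).sum_mem (fun k _ ↦ ?_) (by simp [Fin.sum_univ_three])
      fun k _ ↦ subset_convexHull ℝ _ (by fin_cases k <;> simp)
    fin_cases k
    · exact sub_nonneg.2 ((div_le_one ha).2 hx)
    · exact sub_nonneg.2 hweights
    · exact div_nonneg hy hb.le

end LatticePoints

section RightTriangle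

variable {a b : ℤ} {v : ℤ × ℤ} {V : Finset (ℤ × ℤ)}

/-- The lattice points of the triangle with vertices `(0, 0)`, `(a, 0)`, `(a, b)`. -/
noncomputable def trianglePoints (a b : ℤ) : Finset (ℤ × ℤ) :=
  {v ∈ Finset.Icc (0, 0) (a, b) | a * v.2 ≤ b * v.1}

/-- The lattice points of the edge `L` from `(0, 0)` to `(a, b)`. -/
noncomputable def hypotenusePoints (a b : ℤ) : Finset (ℤ × ℤ) :=
  {v ∈ Finset.Icc (0, 0) (a, b) | a * v.2 = b * v.1}

/-- The endpoints of `L`. -/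
def hypotenuseEnds (a b : ℤ) : Finset (ℤ × ℤ) := {(0, 0), (a, b)}

/-- The lattice points of the triangle off the hypotenuse and off the legs. -/
noncomputable def innerPoints (a b : ℤ) : Finset (ℤ × ℤ) :=
  {v ∈ Finset.Icc (0, 0) (a, b) | 0 < v.2 ∧ v.1 < a ∧ a * v.2 < b * v.1}

/-- The lattice points of the legs, except for the endpoints of the hypotenuse. -/
noncomputable def legPoints (a b : ℤ) : Finset (ℤ × ℤ) :=
  Finset.Ioc 0 a ×ˢ {0} ∪ {a} ×ˢ Finset.Ioo 0 b

theorem mem_Icc_of_mem_triangle (ha : 0 < a) (hb : 0 < b) (hy : 0 ≤ v.2) (hx : v.1 ≤ a)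
    (hxy : a * v.2 ≤ b * v.1) : v ∈ Finset.Icc (0, 0) (a, b) := by
  refine Finset.mem_Icc.2 ⟨⟨?_, hy⟩, hx, ?_⟩
  · exact nonneg_of_mul_nonneg_right ((mul_nonneg ha.le hy).trans hxy) hb
  · exact le_of_mul_le_mul_left (hxy.trans (by rw [mul_comm a]; gcongr)) ha

theorem mem_trianglePoints (ha : 0 < a) (hb : 0 < b) :
    v ∈ trianglePoints a b ↔ 0 ≤ v.2 ∧ v.1 ≤ a ∧ a * v.2 ≤ b * v.1 := by
  rw [trianglePoints, Finset.mem_filter]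
  refine ⟨fun ⟨h, hxy⟩ ↦ ?_, fun ⟨hy, hx, hxy⟩ ↦ ⟨mem_Icc_of_mem_triangle ha hb hy hx hxy, hxy⟩⟩
  exact ⟨(Finset.mem_Icc.1 h).1.2, (Finset.mem_Icc.1 h).2.1, hxy⟩

theorem mem_hypotenusePoints (ha : 0 < a) (hb : 0 < b) :
    v ∈ hypotenusePoints a b ↔ 0 ≤ v.2 ∧ v.1 ≤ a ∧ a * v.2 = b * v.1 := by
  rw [hypotenusePoints, Finset.mem_filter]
  refine ⟨fun ⟨h, hxy⟩ ↦ ?_,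
    fun ⟨hy, hx, hxy⟩ ↦ ⟨mem_Icc_of_mem_triangle ha hb hy hx hxy.le, hxy⟩⟩
  exact ⟨(Finset.mem_Icc.1 h).1.2, (Finset.mem_Icc.1 h).2.1, hxy⟩

theorem mem_innerPoints (ha : 0 < a) (hb : 0 < b) :
    v ∈ innerPoints a b ↔ 0 < v.2 ∧ v.1 < a ∧ a * v.2 < b * v.1 := by
  rw [innerPoints, Finset.mem_filter, and_iff_right_iff_imp]
  exact fun ⟨hy, hx, hxy⟩ ↦ mem_Icc_of_mem_triangle ha hb hy.le hx.le hxy.le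

theorem mem_hypotenuseEnds : v ∈ hypotenuseEnds a b ↔ v = (0, 0) ∨ v = (a, b) := by
  rw [hypotenuseEnds, Finset.mem_insert, Finset.mem_singleton]

theorem card_hypotenuseEnds (ha : 0 < a) : (hypotenuseEnds a b).card = 2 :=
  Finset.card_pair fun h ↦ ha.ne (congrArg Prod.fst h)

theorem disjoint_innerPoints_hypotenusePoints :
    Disjoint (innerPoints a b) (hypotenusePoints a b) :=
  Finset.disjoint_filter.2 fun _ _ h ↦ h.2.2.ne

theorem card_legPoints (ha : 0 < a) (hb : 0 < b) : ((legPoints a b).card : ℤ) = a + b - 1 := by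
  have hdisj : Disjoint (Finset.Ioc 0 a ×ˢ {0}) ({a} ×ˢ Finset.Ioo 0 b) :=
    Finset.disjoint_product.2 (Or.inr (by simp))
  rw [legPoints, Finset.card_union_of_disjoint hdisj]
  simp only [Finset.card_product, Finset.card_singleton, Int.card_Ioc, Int.card_Ioo]
  omega

theorem trianglePoints_sdiff (ha : 0 < a) (hb : 0 < b) :
    trianglePoints a b \ (innerPoints a b ∪ hypotenusePoints a b) = legPoints a b := by
  ext ⟨x, y⟩
  simp only [legPoints, Finset.mem_sdiff, Finset.mem_union, mem_trianglePoints ha hb,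
    mem_innerPoints ha hb, mem_hypotenusePoints ha hb, Finset.mem_product, Finset.mem_Ioc,
    Finset.mem_Ioo, Finset.mem_singleton]
  constructor
  · rintro ⟨⟨hy, hx, hxy⟩, hnot⟩
    have hlt : a * y < b * x := by
      by_contra h
      exact hnot (Or.inr ⟨hy, hx, by linarith⟩)
    by_cases hy0 : y = 0
    · subst hy0
      exact Or.inl ⟨⟨by nlinarith, hx⟩, rfl⟩
    · have hxa : x = a := by
        by_contra h
        exact hnot (Or.inl ⟨by omega, by omega, hlt⟩)
      subst hxa
      exact Or.inr ⟨rfl, by omega, by nlinarith⟩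
  · rintro (⟨⟨hx0, hxa⟩, rfl⟩ | ⟨rfl, hy0, hyb⟩)
    · have : 0 < b * x := mul_pos hb hx0
      exact ⟨⟨le_rfl, hxa, by linarith⟩, by omega⟩
    · have : x * y < b * x := by nlinarith
      exact ⟨⟨hy0.le, le_rfl, this.le⟩, by omega⟩

theorem card_trianglePoints (ha : 0 < a) (hb : 0 < b) :
    ((trianglePoints a b).card : ℤ) =
      (innerPoints a b).card + (hypotenusePoints a b).card + (a + b - 1) := by
  have hsub : innerPoints a b ∪ hypotenusePoints a b ⊆ trianglePoints a b :=
    Finset.union_subset (Finset.monotone_filter_right _ fun _ _ h ↦ h.2.2.le)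
      (Finset.monotone_filter_right _ fun _ _ h ↦ h.le)
  rw [← Finset.card_sdiff_add_card_eq_card hsub, trianglePoints_sdiff ha hb,
    Finset.card_union_of_disjoint disjoint_innerPoints_hypotenusePoints]
  push_cast
  rw [card_legPoints ha hb, add_comm]

theorem interiorCount_add_boundaryCount_triangle (ha : 0 < a) (hb : 0 < b) {Δ : Set (ℝ × ℝ)}
    (hΔ : Δ = convexHull ℝ {(0, 0), ((a : ℝ), 0), ((a : ℝ), (b : ℝ))}) :
    (interiorCount Δ + boundaryCount Δ : ℤ) =
      (innerPoints a b).card + (hypotenusePoints a b).card + (a + b - 1) := by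
  have hclosed : IsClosed Δ := hΔ ▸ (Set.toFinite _).isClosed_convexHull ℝ
  rw [convexHull_rightTriangle (mod_cast ha) (mod_cast hb)] at hΔ
  rw [← card_trianglePoints ha hb, ← Nat.cast_add, interiorCount_add_boundaryCount hclosed]
  intro v
  rw [mem_trianglePoints ha hb, hΔ]
  simp only [toPlane, Set.mem_ofPred_eq]
  norm_cast

theorem hypotenuseEnds_subset_hullVertices (ha : 0 < a) (hb : 0 < b) :
    hypotenuseEnds a b ⊆ hullVertices toPlane (innerPoints a b ∪ hypotenuseEnds a b) := by
  intro v hv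
  rw [mem_hullVertices_iff_notMem_hullOf_erase toPlane_injective (Finset.mem_union_right _ hv)]
  intro hmem
  rcases mem_hypotenuseEnds.1 hv with rfl | rfl
  · have := le_of_toPlane_mem_hullOf hmem 0 (-1) (-1) fun w hw ↦ by
      simp only [Finset.mem_erase, Finset.mem_union, mem_innerPoints ha hb, mem_hypotenuseEnds]
        at hw
      rcases hw with ⟨hne, h | rfl | rfl⟩ <;> grind
    omega
  · have := le_of_toPlane_mem_hullOf hmem 1 0 (a - 1) fun w hw ↦ by
      simp only [Finset.mem_erase, Finset.mem_union, mem_innerPoints ha hb, mem_hypotenuseEnds]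
        at hw
      rcases hw with ⟨hne, h | rfl | rfl⟩ <;> grind
    omega

theorem toPlane_mem_hullOf_of_mem_hypotenusePoints (ha : 0 < a) (hV : hypotenuseEnds a b ⊆ V)
    (hv : v ∈ hypotenusePoints a b) : toPlane v ∈ hullOf toPlane V := by
  obtain ⟨hbox, hline⟩ := Finset.mem_filter.1 hv
  obtain ⟨⟨hx0, -⟩, hxa, -⟩ := Finset.mem_Icc.1 hbox
  have ha' : (0 : ℝ) < a := mod_cast ha
  have hx0' : (0 : ℝ) ≤ v.1 := mod_cast hx0
  have hxa' : (v.1 : ℝ) ≤ a := mod_cast hxa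
  have hline' : (a : ℝ) * v.2 = b * v.1 := mod_cast hline
  have hseg : toPlane v ∈ segment ℝ (toPlane (0, 0)) (toPlane (a, b)) := by
    refine ⟨1 - v.1 / a, v.1 / a, sub_nonneg.2 ((div_le_one ha').2 hxa'),
      div_nonneg hx0' ha'.le, by ring, ?_⟩
    simp only [toPlane, Int.cast_zero, Prod.smul_mk, smul_eq_mul, mul_zero, Prod.mk_add_mk,
      zero_add, Prod.mk.injEq]
    constructor <;> field_simp
    linarith
  exact (convex_hullOf toPlane V).segment_subset
    (mem_hullOf (hV (mem_hypotenuseEnds.2 (Or.inl rfl))))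
    (mem_hullOf (hV (mem_hypotenuseEnds.2 (Or.inr rfl)))) hseg

theorem mem_innerPoints_union_hypotenusePoints (ha : 0 < a) (hb : 0 < b)
    (hV : V ⊆ innerPoints a b ∪ hypotenuseEnds a b) (hv : toPlane v ∈ hullOf toPlane V) :
    v ∈ innerPoints a b ∪ hypotenusePoints a b := by
  have hcases : ∀ w ∈ V, (0 < w.2 ∧ w.1 < a ∧ a * w.2 < b * w.1) ∨ w = (0, 0) ∨ w = (a, b) :=
    fun w hw ↦ by
      simpa only [Finset.mem_union, mem_innerPoints ha hb, mem_hypotenuseEnds] using hV hw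
  have hy : 0 ≤ v.2 := by
    have := le_of_toPlane_mem_hullOf hv 0 (-1) 0 fun w hw ↦ by
      rcases hcases w hw with h | rfl | rfl <;> grind
    omega
  have hx : v.1 ≤ a := by
    have := le_of_toPlane_mem_hullOf hv 1 0 a fun w hw ↦ by
      rcases hcases w hw with h | rfl | rfl <;> grind
    omega
  have hxy : a * v.2 ≤ b * v.1 := by
    have := le_of_toPlane_mem_hullOf hv (-b) a 0 fun w hw ↦ by
      rcases hcases w hw with h | rfl | rfl <;> linarith
    linarith
  -- The polygon lies above the line through `(0, 0)` and `(a, 1)` and to the left of the line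
  -- through `(a - 1, 0)` and `(a, b)`, so it meets the legs only at `(0, 0)` and `(a, b)`.
  have hbottom : v.1 ≤ a * v.2 := by
    have := le_of_toPlane_mem_hullOf hv 1 (-a) 0 fun w hw ↦ by
      rcases hcases w hw with h | rfl | rfl <;> nlinarith
    linarith
  have hright : b * v.1 - v.2 ≤ b * (a - 1) := by
    have := le_of_toPlane_mem_hullOf hv b (-1) (b * (a - 1)) fun w hw ↦ by
      rcases hcases w hw with h | rfl | rfl <;> nlinarith
    linarith
  rw [Finset.mem_union, mem_innerPoints ha hb, mem_hypotenusePoints ha hb]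
  rcases hxy.eq_or_lt with heq | hlt
  · exact Or.inr ⟨hy, hx, heq⟩
  · refine Or.inl ⟨hy.lt_of_ne' fun hy0 ↦ ?_, hx.lt_of_ne fun hxa ↦ ?_, hlt⟩
    · rw [hy0] at hbottom hlt
      nlinarith
    · rw [hxa] at hright hlt
      nlinarith

/-- The set `C = ⋃ C_k`, each polygon being encoded by its set of vertices; `k - 1` is then
`V.card - 2`. The inequalities say that a vertex other than the endpoints of `L` lies in `Δ`, off
its legs and off `L`. -/
noncomputable def rootedPolygons (a b : ℤ) : Finset (Finset (ℤ × ℤ)) :=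
  (Finset.Icc (0, 0) (a, b)).powerset.filter fun V ↦
    2 ≤ V.card ∧ (0, 0) ∈ V ∧ (a, b) ∈ V ∧
      (∀ v ∈ V, toPlane v ∉ convexHull ℝ (toPlane '' (V.erase v : Finset (ℤ × ℤ)))) ∧
      ∀ v ∈ V, v ≠ (0, 0) → v ≠ (a, b) → 0 < v.2 ∧ v.1 < a ∧ a * v.2 < b * v.1

theorem rootedPolygons_eq (ha : 0 < a) (hb : 0 < b) :
    rootedPolygons a b =
      polytopesThrough toPlane (innerPoints a b) (hypotenuseEnds a b) := by
  ext V
  rw [mem_polytopesThrough, hullVertices_eq_self_iff toPlane_injective, rootedPolygons,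
    Finset.mem_filter, Finset.mem_powerset]
  have hends : hypotenuseEnds a b ⊆ V ↔ (0, 0) ∈ V ∧ (a, b) ∈ V := by
    rw [hypotenuseEnds, Finset.insert_subset_iff, Finset.singleton_subset_iff]
  rw [hends]
  constructor
  · rintro ⟨-, -, h0, hab, hvert, hinner⟩
    refine ⟨fun v hv ↦ ?_, ⟨h0, hab⟩, hvert⟩
    rw [Finset.mem_union, mem_hypotenuseEnds, or_iff_not_imp_right, not_or]
    exact fun ⟨hv0, hvab⟩ ↦ (mem_innerPoints ha hb).2 (hinner v hv hv0 hvab)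
  · rintro ⟨hV, ⟨h0, hab⟩, hvert⟩
    have hinner : ∀ v ∈ V, v ≠ (0, 0) → v ≠ (a, b) → v ∈ innerPoints a b := fun v hv hv0 hvab ↦
      (Finset.mem_union.1 (hV hv)).resolve_right fun h ↦
        (mem_hypotenuseEnds.1 h).elim hv0 hvab
    have hbox : innerPoints a b ∪ hypotenuseEnds a b ⊆ Finset.Icc (0, 0) (a, b) :=
      Finset.union_subset (Finset.filter_subset _ _) (by
        simp [hypotenuseEnds, Finset.insert_subset_iff, Prod.le_def, ha.le, hb.le])
    refine ⟨hV.trans hbox, ?_, h0, hab, hvert, fun v hv hv0 hvab ↦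
      (mem_innerPoints ha hb).1 (hinner v hv hv0 hvab)⟩
    exact (card_hypotenuseEnds ha).symm.le.trans (Finset.card_le_card (hends.2 ⟨h0, hab⟩))

theorem interiorCount_add_boundaryCount_rootedPolygon (ha : 0 < a) (hb : 0 < b)
    (hV : V ∈ rootedPolygons a b) :
    interiorCount (hullOf toPlane V) + boundaryCount (hullOf toPlane V) =
      (pointsInHull toPlane (innerPoints a b) V).card + (hypotenusePoints a b).card := by
  rw [rootedPolygons_eq ha hb, mem_polytopesThrough] at hV
  obtain ⟨hsub, hends, -⟩ := hV
  have hdisj : Disjoint (pointsInHull toPlane (innerPoints a b) V) (hypotenusePoints a b) :=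
    disjoint_innerPoints_hypotenusePoints.mono_left (Finset.filter_subset _ _)
  rw [← Finset.card_union_of_disjoint hdisj]
  refine interiorCount_add_boundaryCount (isClosed_hullOf _ _) fun v ↦ ?_
  rw [Finset.mem_union, pointsInHull, Finset.mem_filter]
  constructor
  · intro hv
    have hmem := mem_innerPoints_union_hypotenusePoints ha hb hsub hv
    exact (Finset.mem_union.1 hmem).imp_left (⟨·, hv⟩)
  · rintro (⟨-, hv⟩ | hv)
    · exact hv
    · exact toPlane_mem_hullOf_of_mem_hypotenusePoints ha hends hv

theorem rootedPolygon_weight {K : Type*} [Field K] {q : K} (hq : q ≠ 0) (ha : 0 < a) (hb : 0 < b)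
    (hV : V ∈ rootedPolygons a b) :
    (q - 1) ^ (V.card - 2) * q ^ (-((V.card : ℤ) - 2)) *
        q ^ (interiorCount (hullOf toPlane V) + boundaryCount (hullOf toPlane V) : ℤ) =
      (q - 1) ^ (V \ hypotenuseEnds a b).card *
        q ^ (pointsInHull toPlane (innerPoints a b) V \ (V \ hypotenuseEnds a b)).card *
          q ^ (hypotenusePoints a b).card := by
  have hcount := interiorCount_add_boundaryCount_rootedPolygon ha hb hV
  rw [rootedPolygons_eq ha hb] at hV
  obtain ⟨-, hends, -⟩ := mem_polytopesThrough.1 hV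
  have hcard := Finset.card_sdiff_add_card_eq_card hends
  have hinner := Finset.card_sdiff_add_card_eq_card (sdiff_subset_pointsInHull hV)
  rw [card_hypotenuseEnds ha] at hcard
  rw [← hcard, Nat.add_sub_cancel, mul_assoc, mul_assoc, ← zpow_add₀ hq, ← pow_add,
    ← zpow_natCast q]
  congr 2
  omega

end RightTriangle

theorem stmt12_general {K : Type*} [Field K] {q : K} (hq : q ≠ 0) {i j : ℕ} (hi : 0 < i)
    (hj : 0 < j) {Δ : Set (ℝ × ℝ)}
    (hΔ : Δ = convexHull ℝ {(0, 0), ((i : ℝ), 0), ((i : ℝ), (j : ℝ))}) :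
    ∑ V ∈ rootedPolygons i j, (q - 1) ^ (V.card - 2) * q ^ (-((V.card : ℤ) - 2)) *
        q ^ (interiorCount (hullOf toPlane V) + boundaryCount (hullOf toPlane V) : ℤ) =
      q ^ ((interiorCount Δ + boundaryCount Δ : ℤ) - (((i + j : ℕ) : ℤ) - 1)) := by
  have hi' : (0 : ℤ) < i := mod_cast hi
  have hj' : (0 : ℤ) < j := mod_cast hj
  have hsum := sum_polytopesThrough (q - 1) toPlane_injective
    (hypotenuseEnds_subset_hullVertices hi' hj')
  rw [sub_add_cancel, ← rootedPolygons_eq hi' hj'] at hsum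
  rw [Finset.sum_congr rfl fun V hV ↦ rootedPolygon_weight hq hi' hj' hV, ← Finset.sum_mul, hsum,
    interiorCount_add_boundaryCount_triangle hi' hj' (by simpa only [Int.cast_natCast] using hΔ),
    Nat.cast_add, add_sub_cancel_right, ← Nat.cast_add, zpow_natCast, pow_add]

/-- With `C = ⋃_{k≥1} C_k` the finite set of admissible convex lattice polygons (encoded by their
vertex finsets, so that a polygon `P ∈ C_k` has `v(P) = k + 1` vertices),
`∑_{k≥1} ∑_{P∈C_k} (q−1)^{k−1} q^{−(k−1)} q^{i(P)+b(P)} = q^{i(Δ)+b(Δ)−(n−1)}`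
for every real `q > 0`, where for `V ∈ C` we have `k − 1 = V.card − 2`. -/
theorem stmt12 (i j : ℕ) (hi : 0 < i) (hj : 0 < j) (n : ℕ) (hn : n = i + j)
    (coe : ℤ × ℤ → ℝ × ℝ) (hcoe : coe = fun p => ((p.1 : ℝ), (p.2 : ℝ)))
    (Δ : Set (ℝ × ℝ))
    (hΔ : Δ = convexHull ℝ {((0 : ℝ), (0 : ℝ)), ((i : ℝ), (0 : ℝ)), ((i : ℝ), (j : ℝ))})
    (C : Finset (Finset (ℤ × ℤ)))
    (hC : C = (Finset.Icc ((0 : ℤ), (0 : ℤ)) ((i : ℤ), (j : ℤ))).powerset.filter (fun V =>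
      2 ≤ V.card ∧ ((0, 0) : ℤ × ℤ) ∈ V ∧ ((i : ℤ), (j : ℤ)) ∈ V ∧
      (∀ v ∈ V, coe v ∉ convexHull ℝ (coe '' ((V.erase v : Finset (ℤ × ℤ)) : Set (ℤ × ℤ)))) ∧
      (∀ v ∈ V, v ≠ ((0, 0) : ℤ × ℤ) → v ≠ ((i : ℤ), (j : ℤ)) →
        0 < v.2 ∧ v.1 < (i : ℤ) ∧ (i : ℤ) * v.2 < (j : ℤ) * v.1))) :
    ∀ q : ℝ, 0 < q →
      ∑ V ∈ C, (q - 1) ^ (V.card - 2) * q ^ (-((V.card : ℤ) - 2)) *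
          q ^ ((({p : ℤ × ℤ | coe p ∈
                interior (convexHull ℝ (coe '' ((V : Finset (ℤ × ℤ)) : Set (ℤ × ℤ))))}.ncard : ℤ)
            + ({p : ℤ × ℤ | coe p ∈
                frontier (convexHull ℝ (coe '' ((V : Finset (ℤ × ℤ)) : Set (ℤ × ℤ))))}.ncard : ℤ)))
      = q ^ ((({p : ℤ × ℤ | coe p ∈ interior Δ}.ncard : ℤ)
            + ({p : ℤ × ℤ | coe p ∈ frontier Δ}.ncard : ℤ)) - ((n : ℤ) - 1)) := by
  subst hn hcoe hΔ hC
  exact fun q hq ↦ stmt12_general hq.ne' hi hj rfl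
end
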